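/- arXiv:math/0402395 — 2 statements merged into one kernel-verified Lean document; each statement's English description precedes it below -/
import Mathlib

section
/- Let H be an undirected graph without loops and k ≥ −1 an integer. If the polyhedral complex Hom(K_2, H) is k-connected, then χ(H) ≥ k + 3. -/
open Finset

noncomputable section
namespace Lovasz




structure Graph where
  V : Type
  fintypeV : Fintype V
  adj : V → V → Prop
  symm : ∀ {x y : V}, adj x y → adj y x

attribute [instance] Graph.fintypeV

def Graph.Loopless (G : Graph) : Prop := ∀ v : G.V, ¬ G.adj v v

def GraphHom (G H : Graph) : Type :=
  {f : G.V → H.V // ∀ x y : G.V, G.adj x y → H.adj (f x) (f y)}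

@[reducible] def completeGraph (n : ℕ) : Graph where
  V := Fin n
  fintypeV := inferInstance
  adj x y := x ≠ y
  symm h := h.symm

def chromaticNumber (G : Graph) : ℕ :=
  sInf {n : ℕ | Nonempty (GraphHom G (completeGraph n))}

@[reducible] def oddCycle (r : ℕ) : Graph where
  V := ZMod (2 * r + 1)
  fintypeV := inferInstance
  adj x y := x = y + 1 ∨ y = x + 1
  symm h := h.symm

/-- The cycle with `m` vertices (trivial graph for `m = 0`). -/
@[reducible] def cycleGraph : ℕ → Graph
  | 0 => ⟨Empty, inferInstance, fun _ _ => False, fun h => h⟩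
  | (n+1) =>
    { V := ZMod (n+1)
      fintypeV := inferInstance
      adj := fun x y => x = y + 1 ∨ y = x + 1
      symm := fun h => h.symm }

/-- The geometric realization of the polyhedral complex `Hom(G,H)`: the space of functions
assigning to each vertex of `G` a probability distribution on `V(H)`, such that any choice of
vertices from the supports yields a graph homomorphism. -/
abbrev HomComplex (G H : Graph) : Type :=
  {f : G.V → H.V → ℝ //
    (∀ v w, 0 ≤ f v w) ∧ (∀ v, ∑ w, f v w = 1) ∧
    ∀ x y : G.V, G.adj x y → ∀ a b : H.V, f x a ≠ 0 → f y b ≠ 0 → H.adj a b}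

/-- The geometric realization of the simplicial complex `Hom₊(G,H)`. -/
abbrev HomPlus (G H : Graph) : Type :=
  {f : G.V → H.V → ℝ //
    (∀ v w, 0 ≤ f v w) ∧ (∑ v, ∑ w, f v w = 1) ∧
    ∀ x y : G.V, G.adj x y → ∀ a b : H.V, f x a ≠ 0 → f y b ≠ 0 → H.adj a b}

/-- The geometric realization of the independence complex `Ind(G)`. -/
abbrev IndSpace (G : Graph) : Type :=
  {f : G.V → ℝ //
    (∀ v, 0 ≤ f v) ∧ (∑ v, f v = 1) ∧
    ∀ x y : G.V, G.adj x y → f x = 0 ∨ f y = 0}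

/-- The map `Hom(G',H) → Hom(G,H)` induced by a graph homomorphism `ι : G → G'`. -/
def precompHom {G G' : Graph} (ι : GraphHom G G') (H : Graph) :
    C(HomComplex G' H, HomComplex G H) where
  toFun f := ⟨fun v w => f.1 (ι.1 v) w,
    fun v w => f.2.1 (ι.1 v) w,
    fun v => f.2.2.1 (ι.1 v),
    fun x y h a b ha hb => f.2.2.2 (ι.1 x) (ι.1 y) (ι.2 x y h) a b ha hb⟩
  continuous_toFun := by
    apply Continuous.subtype_mk
    apply continuous_pi; intro v
    apply continuous_pi; intro w
    exact (continuous_apply w).comp ((continuous_apply (ι.1 v)).comp continuous_subtype_val)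

/-- The map `Hom₊(G',H) → Hom₊(G,H)` induced by an *invertible* graph homomorphism is only used
for involutions, where precomposition preserves the normalization; for bijective `ι` the total
sum is preserved. -/
def precompHomPlus {G : Graph} (ι : GraphHom G G) (hbij : Function.Bijective ι.1) (H : Graph) :
    C(HomPlus G H, HomPlus G H) where
  toFun f := ⟨fun v w => f.1 (ι.1 v) w,
    fun v w => f.2.1 (ι.1 v) w,
    by
      show ∑ v, ∑ w, f.1 (ι.1 v) w = 1
      have h2 : ∑ v, ∑ w, f.1 (ι.1 v) w = ∑ v, ∑ w, f.1 v w :=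
        Fintype.sum_bijective ι.1 hbij _ _ (fun v => rfl)
      rw [h2]; exact f.2.2.1,
    fun x y h a b ha hb => f.2.2.2 (ι.1 x) (ι.1 y) (ι.2 x y h) a b ha hb⟩
  continuous_toFun := by
    apply Continuous.subtype_mk
    apply continuous_pi; intro v
    apply continuous_pi; intro w
    exact (continuous_apply w).comp ((continuous_apply (ι.1 v)).comp continuous_subtype_val)

lemma precompHom_invol {G : Graph} (γ : GraphHom G G) (hγ : ∀ v, γ.1 (γ.1 v) = v) (H : Graph) :
    ∀ f, precompHom γ H (precompHom γ H f) = f := by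
  intro f
  apply Subtype.ext
  funext v w
  show f.1 (γ.1 (γ.1 v)) w = f.1 v w
  rw [hγ]

lemma precompHomPlus_invol {G : Graph} (γ : GraphHom G G) (hbij : Function.Bijective γ.1)
    (hγ : ∀ v, γ.1 (γ.1 v) = v) (H : Graph) :
    ∀ f, precompHomPlus γ hbij H (precompHomPlus γ hbij H f) = f := by
  intro f
  apply Subtype.ext
  funext v w
  show f.1 (γ.1 (γ.1 v)) w = f.1 v w
  rw [hγ]

/-- The reflection `x ↦ -x` of the odd cycle. -/
def cycleReflect (r : ℕ) : GraphHom (oddCycle r) (oddCycle r) :=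
  ⟨fun x => (-x : ZMod (2 * r + 1)), by
    intro x y h
    change (x : ZMod (2 * r + 1)) = y + 1 ∨ y = x + 1 at h
    change (-x : ZMod (2 * r + 1)) = -y + 1 ∨ (-y : ZMod (2 * r + 1)) = -x + 1
    rcases h with h | h
    · right; rw [h]; ring
    · left; rw [h]; ring⟩

lemma cycleReflect_invol (r : ℕ) : ∀ v, (cycleReflect r).1 ((cycleReflect r).1 v) = v :=
  fun v => neg_neg (v : ZMod (2 * r + 1))

lemma cycleReflect_bijective (r : ℕ) : Function.Bijective (cycleReflect r).1 :=
  Function.Involutive.bijective (fun v => neg_neg (v : ZMod (2 * r + 1)))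

open scoped Topology in
/-- `k`-connectedness (`k ≥ -1`): nonempty, path-connected (when `k ≥ 0`), and all homotopy
groups `π_i` vanish for `1 ≤ i ≤ k`. -/
def KConnected (k : ℤ) (X : Type) [TopologicalSpace X] : Prop :=
  Nonempty X ∧ ((0:ℤ) ≤ k → PathConnectedSpace X) ∧
    ∀ i : ℕ, 1 ≤ i → (i : ℤ) ≤ k → ∀ x : X, Subsingleton (HomotopyGroup (Fin i) X x)


abbrev Ch (V : Type) := List V →₀ ZMod 2

def lin {V : Type} {M : Type} [AddCommGroup M] [Module (ZMod 2) M] (f : List V → M) : Ch V →ₗ[ZMod 2] M :=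
  Finsupp.linearCombination (ZMod 2) f

lemma lin_single {V M : Type} [AddCommGroup M] [Module (ZMod 2) M] (f : List V → M) (l : List V) :
    lin f (Finsupp.single l 1) = f l := by simp [lin]

lemma lin_supp {V M : Type} [AddCommGroup M] [Module (ZMod 2) M] (F : Ch V →ₗ[ZMod 2] M)
    (S : Set (List V)) (p : Submodule (ZMod 2) M) (hF : ∀ l ∈ S, F (Finsupp.single l 1) ∈ p)
    (h : Ch V) (hh : h ∈ Finsupp.supported (ZMod 2) (ZMod 2) S) : F h ∈ p := by
  rw [Finsupp.supported_eq_span_single] at hh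
  have : Submodule.span (ZMod 2) ((fun i => Finsupp.single i (1 : ZMod 2)) '' S) ≤ p.comap F := by
    rw [Submodule.span_le]
    rintro _ ⟨l, hl, rfl⟩
    exact hF l hl
  exact this hh

lemma lin_eq {V M : Type} [AddCommGroup M] [Module (ZMod 2) M] (F G : Ch V →ₗ[ZMod 2] M)
    (S : Set (List V)) (hF : ∀ l ∈ S, F (Finsupp.single l 1) = G (Finsupp.single l 1))
    (h : Ch V) (hh : h ∈ Finsupp.supported (ZMod 2) (ZMod 2) S) : F h = G h := by
  have := lin_supp (F - G) S ⊥ (fun l hl => by simp [hF l hl]) h hh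
  simpa [sub_eq_zero] using this

lemma lin_ext {V M : Type} [AddCommGroup M] [Module (ZMod 2) M] (F G : Ch V →ₗ[ZMod 2] M)
    (hF : ∀ l, F (Finsupp.single l 1) = G (Finsupp.single l 1)) : F = G := by
  ext l; simpa using hF l

lemma two_cancel {M : Type} [AddCommGroup M] [Module (ZMod 2) M] (x : M) : x + x = 0 := by
  have : ((1 : ZMod 2) + 1) • x = 0 := by
    have : (1 : ZMod 2) + 1 = 0 := by decide
    rw [this, zero_smul]
  simpa [add_smul] using this

/-- prepend a vertex -/
def cn {V : Type} (v : V) : Ch V →ₗ[ZMod 2] Ch V := lin fun l => Finsupp.single (v :: l) 1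

def mp {V : Type} (f : V → V) : Ch V →ₗ[ZMod 2] Ch V := lin fun l => Finsupp.single (l.map f) 1

def bd {V : Type} : List V → Ch V
  | [] => 0
  | v :: l => Finsupp.single l 1 + cn v (bd l)

def pr {V : Type} (f g : V → V) : List V → Ch V
  | [] => 0
  | v :: l => Finsupp.single (f v :: g v :: l.map g) 1 + cn (f v) (pr f g l)

def D {V : Type} : Ch V →ₗ[ZMod 2] Ch V := lin bd
def P {V : Type} (f g : V → V) : Ch V →ₗ[ZMod 2] Ch V := lin (pr f g)

@[simp] lemma cn_single {V : Type} (v : V) (l : List V) :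
    cn v (Finsupp.single l 1) = Finsupp.single (v :: l) 1 := lin_single _ _
@[simp] lemma mp_single {V : Type} (f : V → V) (l : List V) :
    mp f (Finsupp.single l 1) = Finsupp.single (l.map f) 1 := lin_single _ _
@[simp] lemma D_single {V : Type} (l : List V) :
    D (Finsupp.single l 1) = bd l := lin_single _ _
@[simp] lemma P_single {V : Type} (f g : V → V) (l : List V) :
    P f g (Finsupp.single l 1) = pr f g l := lin_single _ _

lemma D_cn {V : Type} (v : V) (c : Ch V) : D (cn v c) = c + cn v (D c) := by
  have : D ∘ₗ cn v = LinearMap.id + cn v ∘ₗ D := lin_ext _ _ (fun l => by simp [bd])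
  exact LinearMap.congr_fun this c

lemma P_cn {V : Type} (f g : V → V) (v : V) (c : Ch V) :
    P f g (cn v c) = cn (f v) (cn (g v) (mp g c)) + cn (f v) (P f g c) := by
  have : P f g ∘ₗ cn v = cn (f v) ∘ₗ cn (g v) ∘ₗ mp g + cn (f v) ∘ₗ P f g :=
    lin_ext _ _ (fun l => by simp [pr])
  exact LinearMap.congr_fun this c

lemma mp_cn {V : Type} (f : V → V) (v : V) (c : Ch V) :
    mp f (cn v c) = cn (f v) (mp f c) := by
  have : mp f ∘ₗ cn v = cn (f v) ∘ₗ mp f := lin_ext _ _ (fun l => by simp)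
  exact LinearMap.congr_fun this c

lemma D_mp_list {V : Type} (f : V → V) (l : List V) : bd (l.map f) = mp f (bd l) := by
  induction l with
  | nil => simp [bd]
  | cons v l ih => simp [bd, ih, mp_cn]

lemma D_mp {V : Type} (f : V → V) (c : Ch V) : D (mp f c) = mp f (D c) := by
  have : D ∘ₗ mp f = mp f ∘ₗ D := lin_ext _ _ (fun l => by simp [D_mp_list])
  exact LinearMap.congr_fun this c

lemma mp_mp {V : Type} (f g : V → V) (c : Ch V) : mp f (mp g c) = mp (f ∘ g) c := by
  have : mp f ∘ₗ mp g = mp (f ∘ g) := lin_ext _ _ (fun l => by simp)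
  exact LinearMap.congr_fun this c

lemma mp_id {V : Type} (c : Ch V) : mp (fun x => x) c = c := by
  have : mp (fun x : V => x) = LinearMap.id := lin_ext _ _ (fun l => by simp)
  exact LinearMap.congr_fun this c

lemma prism_list {V : Type} (f g : V → V) (l : List V) :
    D (pr f g l) + P f g (bd l) = Finsupp.single (l.map f) 1 + Finsupp.single (l.map g) 1 := by
  induction l with
  | nil => simp [pr, bd, two_cancel]
  | cons v l ih =>
    have h2 := congrArg (cn (f v)) ih
    simp only [map_add, cn_single] at h2
    simp only [pr, bd, map_add, D_single, P_single, D_cn, P_cn, cn_single, List.map_cons, D_mp_list]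
    have e1 := two_cancel (pr f g l)
    have e2 := two_cancel (cn (f v) (cn (g v) (mp g (bd l))))
    have e3 := two_cancel (Finsupp.single (f v :: List.map g l) (1 : ZMod 2))
    linear_combination (norm := module) h2 + e1 + e2 + e3

lemma prism {V : Type} (f g : V → V) (c : Ch V) :
    D (P f g c) + P f g (D c) = mp f c + mp g c := by
  have : D ∘ₗ P f g + P f g ∘ₗ D = mp f + mp g := lin_ext _ _ (fun l => by simp [prism_list])
  exact LinearMap.congr_fun this c

/-- iterated prism -/
lemma prism_sum {V : Type} (f : ℕ → V → V) (N : ℕ) (c : Ch V) (hc : D c = 0) :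
    D (∑ i ∈ range N, P (f i) (f (i+1)) c) = mp (f 0) c + mp (f N) c := by
  induction N with
  | zero => simp [two_cancel]
  | succ N ih =>
    rw [sum_range_succ, map_add, ih]
    have := prism (f N) (f (N+1)) c
    rw [hc, map_zero, add_zero] at this
    rw [this]
    have e1 := two_cancel (mp (f N) c)
    linear_combination (norm := module) e1

/-- cochains -/
def Wc {V : Type} (s : ℕ → V → ZMod 2) : ℕ → List V → ZMod 2
  | _, [] => 0
  | _, [_] => 1
  | i, v :: w :: l => (s i v + s i w) * Wc s (i+1) (w :: l)

def Ac {V : Type} (s : ℕ → V → ZMod 2) : ℕ → List V → ZMod 2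
  | _, [] => 0
  | i, [v] => s i v
  | i, v :: w :: l => (s i v + s i w) * Ac s (i+1) (w :: l)

lemma Ac_cn {V : Type} (s : ℕ → V → ZMod 2) (i : ℕ) (u v : V) (c : Ch V) :
    lin (Ac s i) (cn u (cn v c)) = (s i u + s i v) * lin (Ac s (i+1)) (cn v c) := by
  have : lin (Ac s i) ∘ₗ cn u ∘ₗ cn v = (s i u + s i v) • (lin (Ac s (i+1)) ∘ₗ cn v) :=
    lin_ext _ _ (fun l => by simp [lin_single, Ac])
  exact LinearMap.congr_fun this c

lemma Ac_bd {V : Type} (s : ℕ → V → ZMod 2) (l : List V) : ∀ (i : ℕ) (u v : V),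
    lin (Ac s i) (bd (u :: v :: l)) = Wc s i (u :: v :: l) := by
  induction l with
  | nil => intro i u v; simp [bd, lin_single, Ac, Wc]; ring
  | cons x l ih =>
    intro i u v
    have h := ih (i+1) v x
    rw [bd] at h ⊢
    rw [bd]
    simp only [map_add, cn_single, lin_single, Ac_cn] at h ⊢
    rw [Wc, ← h]
    simp only [Ac]
    have := two_cancel (s i x * Ac s (i+1) (x :: l))
    linear_combination this

lemma Ac_neg {V : Type} (s : ℕ → V → ZMod 2) (ν : V → V) (l : List V)
    (hl : ∀ v ∈ l, ∀ i, s i (ν v) = s i v + 1) : ∀ i,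
    Ac s i l + Ac s i (l.map ν) = Wc s i l := by
  induction l with
  | nil => intro i; simp [Ac, Wc]
  | cons v l ih =>
    intro i
    cases l with
    | nil => 
      simp [Ac, Wc, hl v (by simp) i]
      linear_combination two_cancel (s i v)
    | cons w l =>
      have := ih (fun v hv => hl v (by simp [hv])) (i+1)
      simp only [List.map_cons] at this
      simp only [Ac, Wc, ← this, List.map_cons, hl v (by simp) i, hl w (by simp) i]
      linear_combination Ac s (i+1) (ν w :: l.map ν) * two_cancel (1 : ZMod 2)

lemma Wc_zero {V : Type} (s : ℕ → V → ZMod 2) (j : ℕ) (l : List V) 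
    (hl : ∀ v ∈ l, ∀ w ∈ l, s j v = s j w) : ∀ i, i ≤ j → j + 1 < i + l.length → Wc s i l = 0 := by
  induction l with
  | nil => intro i; simp [Wc]
  | cons v l ih =>
    intro i hi hj
    cases l with
    | nil => simp at hj; omega
    | cons w l =>
      rw [Wc]
      rcases hi.eq_or_lt with rfl | hi
      · rw [hl v (by simp) w (by simp), two_cancel, zero_mul]
      · rw [ih (fun v hv w hw => hl v (by simp [hv]) w (by simp [hw])) (i+1) hi (by simp at hj ⊢; omega), mul_zero]

/-- One inductive step of the chain argument: if `h'` has boundary `h + ν h`. -/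
lemma step_eval {V : Type} (s : ℕ → V → ZMod 2) (ν : V → V) (S : Set (List V)) (S' : Set (List V))
    (hS : ∀ l ∈ S, ∀ v ∈ l, ∀ i, s i (ν v) = s i v + 1)
    (hS' : ∀ l ∈ S', 2 ≤ l.length)
    (h h' : Ch V) (hh : h ∈ Finsupp.supported (ZMod 2) (ZMod 2) S)
    (hh' : h' ∈ Finsupp.supported (ZMod 2) (ZMod 2) S') (hD : D h' = h + mp ν h) :
    lin (Wc s 0) h' = lin (Wc s 0) h := by
  have h1 : lin (Wc s 0) h' = lin (Ac s 0) (D h') := by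
    refine lin_eq (lin (Wc s 0)) (lin (Ac s 0) ∘ₗ D) S' ?_ h' hh'
    intro l hl
    have := hS' l hl
    match l, this with
    | u :: v :: l, _ => simp [lin_single, Ac_bd]
  have h2 : lin (Wc s 0) h = lin (Ac s 0) (h + mp ν h) := by
    refine lin_eq (lin (Wc s 0)) (lin (Ac s 0) ∘ₗ (LinearMap.id + mp ν)) S ?_ h hh
    intro l hl
    simp [lin_single, Ac_neg s ν l (hS l hl) 0]
  rw [h1, h2, hD]


lemma pr_supp {V : Type} (f g : V → V) (l : List V) :
    pr f g l ∈ Finsupp.supported (ZMod 2) (ZMod 2)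
      {l' : List V | l'.length = l.length + 1 ∧ ∀ x ∈ l', ∃ y ∈ l, x = f y ∨ x = g y} := by
  induction l with
  | nil => simp [pr]
  | cons v l ih =>
    rw [pr]
    refine Submodule.add_mem _ ?_ ?_
    · apply Finsupp.single_mem_supported
      refine ⟨by simp, ?_⟩
      intro x hx
      simp only [List.mem_cons, List.mem_map] at hx
      rcases hx with rfl | rfl | ⟨y, hy, rfl⟩
      · exact ⟨v, by simp, Or.inl rfl⟩
      · exact ⟨v, by simp, Or.inr rfl⟩
      · exact ⟨y, by simp [hy], Or.inr rfl⟩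
    · refine lin_supp (cn (f v)) _ _ ?_ _ ih
      rintro l' ⟨h1, h2⟩
      rw [cn_single]
      apply Finsupp.single_mem_supported
      refine ⟨by simp [h1], ?_⟩
      intro x hx
      simp only [List.mem_cons] at hx
      rcases hx with rfl | hx
      · exact ⟨v, by simp, Or.inl rfl⟩
      · obtain ⟨y, hy, h⟩ := h2 x hx
        exact ⟨y, by simp [hy], h⟩

def Tset (m : ℕ) : Set (Fin (m+1) → ℝ) := {x | ∑ i, |x i| = 1}

lemma Tset_neg {m : ℕ} {x : Fin (m+1) → ℝ} (hx : x ∈ Tset m) : -x ∈ Tset m := by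
  simpa [Tset] using hx

lemma Tset_ne {m : ℕ} {x : Fin (m+1) → ℝ} (hx : x ∈ Tset m) : x ≠ 0 := by
  rintro rfl
  simp [Tset] at hx

lemma Tset_norm {m : ℕ} {x : Fin (m+1) → ℝ} (hx : x ∈ Tset m) : ‖x‖ ≤ 1 := by
  rw [pi_norm_le_iff_of_nonneg zero_le_one]
  intro i
  rw [← (show ∑ i, |x i| = 1 from hx), Real.norm_eq_abs]
  exact Finset.single_le_sum (f := fun i => |x i|) (fun i _ => abs_nonneg _) (Finset.mem_univ i)

lemma Tset_compact (m : ℕ) : IsCompact (Tset m) := by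
  refine Metric.isCompact_of_isClosed_isBounded ?_ ?_
  · exact isClosed_eq (by fun_prop) continuous_const
  · refine (Metric.isBounded_closedBall (x := (0 : Fin (m+1) → ℝ)) (r := 1)).subset ?_
    intro x hx
    simpa using Tset_norm hx

lemma Tset_single {m : ℕ} (j : Fin (m+1)) : Pi.single j (1 : ℝ) ∈ Tset m := by
  simp [Tset, Pi.single_apply, apply_ite abs]

lemma Tset_comb {m : ℕ} (j : Fin (m+1)) {x : Fin (m+1) → ℝ} (hx : x ∈ Tset m) (hj : x j = 0)
    (t : ℝ) (h0 : 0 ≤ t) (h1 : t ≤ 1) : (1 - t) • x + t • Pi.single j (1 : ℝ) ∈ Tset m := by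
  have hx' : ∑ i, |x i| = 1 := hx
  have : ∀ i, |((1 - t) • x + t • (Pi.single j (1 : ℝ) : Fin (m+1) → ℝ)) i| = (1 - t) * |x i| + t * (if i = j then 1 else 0) := by
    intro i
    by_cases h : i = j
    · subst h; simp [hj, abs_of_nonneg h0]
    · simp [h, abs_mul, abs_of_nonneg (sub_nonneg.2 h1)]
  show ∑ i, _ = _
  rw [Finset.sum_congr rfl (fun i _ => this i), Finset.sum_add_distrib, ← Finset.mul_sum, ← Finset.mul_sum, hx']
  simp

def Sset (m N j : ℕ) : Set (List (Fin (m+1) → ℝ)) :=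
  {l | l.length = j + 1 ∧ (∀ x ∈ l, x ∈ Tset m ∧ ∀ i : Fin (m+1), j < i.val → x i = 0) ∧
    ∀ x ∈ l, ∀ y ∈ l, dist x y ≤ 2 * j / N}

lemma step_dist {m : ℕ} {x y e : Fin (m+1) → ℝ} (hy : y ∈ Tset m)
    (he : e ∈ Tset m) (s t r d : ℝ) (h0 : 0 ≤ s) (h1 : s ≤ 1) (hst : |s - t| ≤ d)
    (hr : dist x y ≤ r) :
    dist ((1 - s) • x + s • e) ((1 - t) • y + t • e) ≤ r + 2 * d := by
  rw [dist_eq_norm] at hr ⊢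
  have e1 : (1 - s) • x + s • e - ((1 - t) • y + t • e) = (1 - s) • (x - y) + (s - t) • (e - y) := by
    module
  rw [e1]
  have h2 : ‖e - y‖ ≤ 2 := (norm_sub_le _ _).trans (by linarith [Tset_norm he, Tset_norm hy])
  have h3 : ‖(1 - s) • (x - y)‖ ≤ 1 * r := by
    rw [norm_smul]
    gcongr
    rw [Real.norm_eq_abs, abs_le]; constructor <;> linarith
  have h4 : ‖(s - t) • (e - y)‖ ≤ d * 2 := by
    rw [norm_smul]
    gcongr
    · exact (abs_nonneg _).trans hst
    · exact hst
  linarith [norm_add_le ((1 - s) • (x - y)) ((s - t) • (e - y))]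

lemma chains (m N : ℕ) (hN : 0 < N) (j : ℕ) (hj : j ≤ m) :
    ∃ h ∈ Finsupp.supported (ZMod 2) (ZMod 2) (Sset m N j),
      D (h + mp (fun x => -x) h) = 0 ∧
      ∀ s : ℕ → (Fin (m+1) → ℝ) → ZMod 2, (∀ i, ∀ x ∈ Tset m, s i (-x) = s i x + 1) →
        lin (Wc s 0) h = 1 := by
  have hN' : (0 : ℝ) < N := by exact_mod_cast hN
  induction j with
  | zero =>
    refine ⟨Finsupp.single [Pi.single 0 1] 1, ?_, ?_, ?_⟩
    · apply Finsupp.single_mem_supported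
      refine ⟨by simp, ?_, by simp⟩
      intro x hx
      simp only [List.mem_singleton] at hx
      subst hx
      refine ⟨Tset_single _, fun i hi => ?_⟩
      rw [Pi.single_apply, if_neg]
      rintro rfl
      simp at hi
    · simp [bd, two_cancel]
    · intro s _
      simp [lin_single, Wc]
  | succ j ih =>
    obtain ⟨h, hh, hD, hs⟩ := ih (by omega)
    set ν : (Fin (m+1) → ℝ) → (Fin (m+1) → ℝ) := fun x => -x with hν
    set e : Fin (m+1) → ℝ := Pi.single ⟨j+1, by omega⟩ 1 with he
    set f : ℕ → (Fin (m+1) → ℝ) → (Fin (m+1) → ℝ) :=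
      fun i x => (1 - (i / N : ℝ)) • x + (i / N : ℝ) • e with hf
    set z := h + mp ν h with hz
    have heT : e ∈ Tset m := Tset_single _
    have hνν : mp ν z = z := by
      rw [hz, map_add, mp_mp]
      have : ν ∘ ν = fun x => x := by funext x; simp [hν]
      rw [this, mp_id]; exact add_comm _ _
    have hzS : z ∈ Finsupp.supported (ZMod 2) (ZMod 2) (Sset m N j) := by
      refine Submodule.add_mem _ hh ?_
      refine lin_supp (mp ν) _ _ ?_ _ hh
      rintro l ⟨h1, h2, h3⟩
      rw [mp_single]
      apply Finsupp.single_mem_supported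
      refine ⟨by simpa using h1, ?_, ?_⟩
      · intro x hx
        obtain ⟨y, hy, rfl⟩ := List.mem_map.1 hx
        exact ⟨Tset_neg (h2 y hy).1, fun i hi => by simp [hν, (h2 y hy).2 i hi]⟩
      · intro x hx y hy
        obtain ⟨x', hx', rfl⟩ := List.mem_map.1 hx
        obtain ⟨y', hy', rfl⟩ := List.mem_map.1 hy
        simpa [hν] using h3 x' hx' y' hy'
    have hDz : D (∑ i ∈ range N, P (f i) (f (i+1)) z) = z := by
      rw [prism_sum f N z hD]
      have h0 : f 0 = fun x => x := by funext x; simp [hf]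
      have h1 : f N = fun _ => e := by funext x; simp [hf, hN'.ne']
      rw [h0, mp_id, h1, hz, map_add, mp_mp]
      have : (fun _ => e) ∘ ν = fun _ => e := rfl
      rw [this, two_cancel, add_zero]
    have hS' : (∑ i ∈ range N, P (f i) (f (i+1)) z) ∈
        Finsupp.supported (ZMod 2) (ZMod 2) (Sset m N (j+1)) := by
      refine Submodule.sum_mem _ fun i hi => ?_
      refine lin_supp (P (f i) (f (i+1))) _ _ ?_ _ hzS
      rintro l ⟨h1, h2, h3⟩
      rw [P_single]
      refine Finsupp.supported_mono ?_ (pr_supp (f i) (f (i+1)) l)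
      rintro l' ⟨h1', h2'⟩
      have hiN : i + 1 ≤ N := Finset.mem_range.1 hi
      have key : ∀ x ∈ l', ∃ y ∈ l, ∃ t : ℝ, (i / N : ℝ) ≤ t ∧ t ≤ i / N + 1 / N ∧ 0 ≤ t ∧ t ≤ 1 ∧
          x = (1 - t) • y + t • e := by
        intro x hx
        obtain ⟨y, hy, hxy⟩ := h2' x hx
        have b0 : (0 : ℝ) ≤ i / N := by positivity
        have b1 : (i / N : ℝ) + 1 / N ≤ 1 := by
          rw [← add_div, div_le_one hN']; exact_mod_cast hiN
        have b2 : (0 : ℝ) ≤ 1 / N := by positivity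
        rcases hxy with hxy | hxy
        · exact ⟨y, hy, i / N, le_rfl, by linarith, b0, by linarith, hxy⟩
        · refine ⟨y, hy, i / N + 1 / N, by linarith, by linarith, by linarith, by linarith, ?_⟩
          rw [hxy, hf]
          simp only [Nat.cast_add, Nat.cast_one, add_div]
      refine ⟨by omega, ?_, ?_⟩
      · intro x hx
        obtain ⟨y, hy, t, -, -, t0, t1, rfl⟩ := key x hx
        refine ⟨Tset_comb _ (h2 y hy).1 ((h2 y hy).2 _ (by simp)) t t0 t1, ?_⟩
        intro a ha
        have : a ≠ ⟨j+1, by omega⟩ := by intro h; rw [h] at ha; simp at ha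
        simp [he, this, (h2 y hy).2 a (by omega)]
      · intro x hx x' hx'
        obtain ⟨y, hy, t, ta, tb, t0, t1, rfl⟩ := key x hx
        obtain ⟨y', hy', t', ta', tb', t0', t1', rfl⟩ := key x' hx'
        have := step_dist (x := y) (h2 y' hy').1 heT t t' _ (1 / N) t0 t1
          (by rw [abs_le]; constructor <;> linarith) (h3 y hy y' hy')
        refine this.trans (le_of_eq ?_)
        push_cast
        ring
    refine ⟨_, hS', ?_, ?_⟩
    · rw [map_add, D_mp, hDz, hνν, two_cancel]
    · intro s hsν
      rw [step_eval s ν (Sset m N j) (Sset m N (j+1)) ?_ ?_ h _ hh hS' hDz, hs s hsν]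
      · intro l hl v hv i
        exact hsν i v (hl.2.1 v hv).1
      · intro l hl
        rw [hl.1]; omega

/-- The Borsuk-Ulam theorem. -/
theorem borsuk_ulam (m : ℕ) (g : (Fin (m+1) → ℝ) → (Fin m → ℝ)) (hg : ContinuousOn g {0}ᶜ)
    (hodd : ∀ x, x ≠ 0 → g (-x) = - g x) : ∃ x, x ≠ 0 ∧ g x = 0 := by
  by_contra! hne
  have hgT : ContinuousOn g (Tset m) := hg.mono (fun x hx => Tset_ne hx)
  obtain ⟨δ, hδ, hδ'⟩ : ∃ δ > 0, ∀ x ∈ Tset m, δ ≤ ‖g x‖ := by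
    obtain ⟨x, hx, hmin⟩ := (Tset_compact m).exists_isMinOn ⟨_, Tset_single 0⟩ hgT.norm
    exact ⟨‖g x‖, norm_pos_iff.2 (hne x (Tset_ne hx)), fun y hy => hmin hy⟩
  have huc := (Tset_compact m).uniformContinuousOn_of_continuous hgT
  rw [Metric.uniformContinuousOn_iff] at huc
  obtain ⟨ε, hε, huc⟩ := huc δ hδ
  obtain ⟨N, hN⟩ := exists_nat_gt (2 * m / ε)
  have hN0 : (0 : ℝ) < N := lt_of_le_of_lt (by positivity) hN
  have hNε : 2 * m / (N : ℝ) < ε := by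
    rw [div_lt_iff₀ hε] at hN; rw [div_lt_iff₀ hN0]; linarith
  obtain ⟨h, hh, -, hs⟩ := chains m N (by exact_mod_cast hN0) m le_rfl
  classical
  let s : ℕ → (Fin (m+1) → ℝ) → ZMod 2 := fun i x =>
    if hi : i < m then
      (if 0 < g x ⟨i, hi⟩ ∨ (g x ⟨i, hi⟩ = 0 ∧ WellOrderingRel x (-x)) then 1 else 0)
    else (if WellOrderingRel x (-x) then 1 else 0)
  have hlex : ∀ x ∈ Tset m, (WellOrderingRel (-x) x ↔ ¬ WellOrderingRel x (-x)) := by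
    intro x hx
    have h0 : x ≠ -x := by
      intro h
      apply Tset_ne hx
      funext i
      have := congrFun h i
      simp only [Pi.neg_apply] at this
      simp only [Pi.zero_apply]
      linarith
    rcases trichotomous_of WellOrderingRel x (-x) with h | h | h
    · simp only [h, not_true, iff_false]; exact asymm_of WellOrderingRel h
    · exact absurd h h0
    · simp only [h, true_iff]; exact asymm_of WellOrderingRel h
  have h11 : (1 : ZMod 2) + 1 = 0 := by decide
  have hsν : ∀ i, ∀ x ∈ Tset m, s i (-x) = s i x + 1 := by
    intro i x hx
    simp only [s]
    rw [hodd x (Tset_ne hx)]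
    by_cases hi : i < m
    · simp only [hi, dif_pos, Pi.neg_apply, neg_neg, hlex x hx]
      rcases lt_trichotomy (g x ⟨i, hi⟩) 0 with h | h | h
      · simp [h, h.not_gt, h.ne]
      · by_cases h' : WellOrderingRel x (-x) <;> simp [h, h', h11]
      · simp [h, h.not_gt, h.ne', h11]
    · simp only [hi, neg_neg, hlex x hx]
      by_cases h' : WellOrderingRel x (-x) <;> simp [h', h11]
  have h1 := hs s hsν
  have h0 : lin (Wc s 0) h = 0 := by
    refine lin_eq (lin (Wc s 0)) 0 _ ?_ h hh
    rintro l ⟨hl1, hl2, hl3⟩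
    rw [lin_single, LinearMap.zero_apply]
    match l, hl1 with
    | v :: l, hl1 =>
      have hv := (hl2 v (by simp)).1
      obtain ⟨i, hi⟩ : ∃ i, δ ≤ |g v i| := by
        by_contra! hcon
        exact absurd (hδ' v hv) (not_le.2 ((pi_norm_lt_iff hδ).2 hcon))
      have hsign : ∀ x ∈ v :: l, s i x = s i v := by
        intro x hx
        have hd := huc v hv x (hl2 x hx).1 ((hl3 v (by simp) x hx).trans_lt hNε)
        have hd' : |g v i - g x i| < δ := by
          rw [← Real.dist_eq]; exact (dist_le_pi_dist _ _ i).trans_lt hd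
        rw [abs_lt] at hd'
        simp only [s, i.2, dif_pos, Fin.eta]
        rcases le_abs.1 hi with h | h
        · have a : 0 < g v i := by linarith
          have b : 0 < g x i := by linarith
          simp [a, b]
        · have a : g v i < 0 := by linarith
          have b : g x i < 0 := by linarith
          simp [a.not_gt, b.not_gt, a.ne, b.ne]
      refine Wc_zero s i _ (fun x hx y hy => (hsign x hx).trans (hsign y hy).symm) 0 (Nat.zero_le _) ?_
      rw [hl1]
      have := i.2
      omega
  rw [h0] at h1
  exact absurd h1 (by decide)

lemma contOn_range {K E X : Type} [TopologicalSpace K] [TopologicalSpace E] [TopologicalSpace X]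
    [CompactSpace K] [T2Space E] (M : K → E) (hM : Continuous M) (F : E → X)
    (hF : Continuous (F ∘ M)) : ContinuousOn F (Set.range M) := by
  rw [continuousOn_iff_isClosed]
  intro t ht
  refine ⟨M '' ((F ∘ M) ⁻¹' t), ?_, ?_⟩
  · exact ((ht.preimage hF).isCompact.image hM).isClosed
  · ext x
    constructor
    · rintro ⟨hx, ⟨p, rfl⟩⟩
      exact ⟨⟨p, hx, rfl⟩, ⟨p, rfl⟩⟩
    · rintro ⟨⟨p, hp, rfl⟩, h⟩
      exact ⟨hp, h⟩

lemma extend_zero {X : Type} [TopologicalSpace X] [PathConnectedSpace X]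
    (ψ : (Fin 1 → ℝ) → X) (hψ : ContinuousOn ψ {0}ᶜ) :
    ∃ F : (Fin 1 → ℝ) → X, Continuous F ∧ ∀ x, 1 ≤ ‖x‖ → F x = ψ x := by
  let γ : Path (ψ (fun _ => -1)) (ψ (fun _ => 1)) := PathConnectedSpace.somePath _ _
  have hb : ∀ x : Fin 1 → ℝ, |x 0| = 1 → γ.extend ((x 0 + 1) / 2) = ψ x := by
    intro x hx
    have hx1 : x = fun _ => x 0 := by funext i; rw [Subsingleton.elim i 0]
    rcases eq_or_eq_neg_of_abs_eq hx with h | h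
    · rw [hx1, h]; norm_num
    · rw [hx1, h]; norm_num
  refine ⟨fun x => if |x 0| ≤ 1 then γ.extend ((x 0 + 1) / 2) else ψ x, ?_, ?_⟩
  · refine continuous_if_le (by fun_prop) continuous_const ?_ ?_ hb
    · exact (γ.continuous_extend.comp (by fun_prop)).continuousOn
    · refine hψ.mono ?_
      rintro x hx rfl
      simp at hx
      linarith
  · intro x hx
    have hn : ‖x‖ = |x 0| := by
      rw [← Real.norm_eq_abs]
      refine le_antisymm ((pi_norm_le_iff_of_nonneg (norm_nonneg _)).2 fun i => ?_) (norm_le_pi_norm x 0)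
      rw [Subsingleton.elim i 0]
    rw [hn] at hx
    show (if |x 0| ≤ 1 then _ else _) = _
    split_ifs with h
    · exact hb x (le_antisymm h hx)
    · rfl

section
open scoped unitInterval Topology

def yv {i : ℕ} (y : Fin i → I) : Fin i → ℝ := fun a => 2 * (y a : ℝ) - 1
def cc (s : ℝ) : ℝ := (2 - 2 * s) / max s (1 - s)
def Qm {i : ℕ} (y : Fin i → I) : Fin (i+1) → ℝ :=
  Fin.cons (2 * ‖yv y‖ - 1) (cc ‖yv y‖ • yv y)
def Nn {i : ℕ} (x : Fin (i+1) → ℝ) : ℝ := |x 0| + ‖Fin.tail x‖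

lemma cc_den (s : ℝ) : 0 < max s (1 - s) := by
  rcases le_total s (1/2) with h | h
  · exact lt_max_of_lt_right (by linarith)
  · exact lt_max_of_lt_left (by linarith)

lemma continuous_yv {i : ℕ} : Continuous (yv : (Fin i → I) → _) := by
  unfold yv; fun_prop

lemma continuous_Qm {i : ℕ} : Continuous (Qm : (Fin i → I) → _) := by
  have h1 : Continuous fun y : Fin i → I => ‖yv y‖ := continuous_yv.norm
  have h2 : Continuous fun y : Fin i → I => cc ‖yv y‖ := 
    Continuous.div (by fun_prop) (by fun_prop) (fun y => (cc_den _).ne')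
  exact Continuous.finCons (by fun_prop) (h2.smul continuous_yv)

lemma continuous_Nn {i : ℕ} : Continuous (Nn : (Fin (i+1) → ℝ) → ℝ) := by
  have : Continuous fun x : Fin (i+1) → ℝ => Fin.tail x := Continuous.finTail continuous_id
  unfold Nn; fun_prop

lemma yv_le {i : ℕ} (y : Fin i → I) : ‖yv y‖ ≤ 1 := by
  refine (pi_norm_le_iff_of_nonneg zero_le_one).2 fun a => ?_
  have h0 := (y a).2.1
  have h1 := (y a).2.2
  rw [Real.norm_eq_abs, abs_le, yv]
  constructor <;> linarith

lemma yv_bd {i : ℕ} (y : Fin i → I) : y ∈ Cube.boundary (Fin i) ↔ ‖yv y‖ = 1 := by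
  constructor
  · rintro ⟨a, ha⟩
    refine le_antisymm (yv_le y) ?_
    refine le_trans ?_ (norm_le_pi_norm _ a)
    rcases ha with ha | ha <;> simp [yv, ha]
    norm_num
  · intro h
    by_contra hcon
    have : ‖yv y‖ < 1 := by
      refine (pi_norm_lt_iff zero_lt_one).2 fun a => ?_
      have h0 : 0 < (y a : ℝ) := by
        refine lt_of_le_of_ne (y a).2.1 fun h => hcon ⟨a, Or.inl (Subtype.ext h.symm)⟩
      have h1 : (y a : ℝ) < 1 := by
        refine lt_of_le_of_ne (y a).2.2 fun h => hcon ⟨a, Or.inr (Subtype.ext h)⟩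
      rw [Real.norm_eq_abs, abs_lt, yv]
      constructor <;> linarith
    linarith

lemma exists_yv {i : ℕ} (u : Fin i → ℝ) (hu : ‖u‖ ≤ 1) : ∃ y : Fin i → I, yv y = u := by
  have h : ∀ a, |u a| ≤ 1 := fun a => (norm_le_pi_norm u a).trans hu
  refine ⟨fun a => ⟨(u a + 1) / 2, ?_, ?_⟩, ?_⟩
  · linarith [(abs_le.1 (h a)).1]
  · linarith [(abs_le.1 (h a)).2]
  · funext a; simp only [yv]; ring

lemma yv_inj {i : ℕ} {y y' : Fin i → I} (h : yv y = yv y') : y = y' := by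
  funext a
  have := congrFun h a
  simp only [yv] at this
  exact Subtype.ext (by linarith)

lemma cc_pos {s : ℝ} (hs : s < 1) : 0 < cc s := div_pos (by linarith) (cc_den s)

lemma cc_mul {s : ℝ} : cc s * s = 1 - |2 * s - 1| := by
  have := (cc_den s).ne'
  unfold cc
  rw [div_mul_eq_mul_div, div_eq_iff this]
  rcases le_total s (1/2) with h | h
  · rw [max_eq_right (by linarith), abs_of_nonpos (by linarith)]; ring
  · rw [max_eq_left (by linarith), abs_of_nonneg (by linarith)]; ring

lemma Qm_Nn {i : ℕ} (y : Fin i → I) : Nn (Qm y) = 1 := by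
  have h : 0 ≤ cc ‖yv y‖ := div_nonneg (by linarith [yv_le y]) (cc_den _).le
  simp only [Nn, Qm, Fin.cons_zero, Fin.tail_cons, norm_smul, Real.norm_eq_abs, abs_of_nonneg h, cc_mul]
  ring

lemma Qm_bd {i : ℕ} (y : Fin i → I) (hy : y ∈ Cube.boundary (Fin i)) :
    Qm y = Fin.cons 1 0 := by
  rw [yv_bd] at hy
  rw [Qm, hy]
  congr 1
  · norm_num
  · simp [cc]

lemma Qm_inj {i : ℕ} (y y' : Fin i → I) (h : Qm y = Qm y') :
    y = y' ∨ (y ∈ Cube.boundary (Fin i) ∧ y' ∈ Cube.boundary (Fin i)) := by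
  have h0 := congrFun h 0
  have h1 := congrArg Fin.tail h
  simp only [Qm, Fin.cons_zero, Fin.tail_cons] at h0 h1
  have hs : ‖yv y‖ = ‖yv y'‖ := by linarith
  rcases (yv_le y).eq_or_lt with h2 | h2
  · exact Or.inr ⟨(yv_bd _).2 h2, (yv_bd _).2 (hs ▸ h2)⟩
  · left
    rw [← hs] at h1
    exact yv_inj (smul_right_injective _ (cc_pos h2).ne' h1)

lemma Qm_surj {i : ℕ} (hi : 1 ≤ i) (x : Fin (i+1) → ℝ) (hx : Nn x = 1) :
    ∃ y : Fin i → I, Qm y = x := by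
  have hxc : x = Fin.cons (x 0) (Fin.tail x) := (Fin.cons_self_tail x).symm
  set a := x 0 with ha
  set u := Fin.tail x with hu
  have hN : |a| + ‖u‖ = 1 := hx
  have ha1 : |a| ≤ 1 := by linarith [norm_nonneg u]
  rw [abs_le] at ha1
  rcases ha1.2.eq_or_lt with h1 | h1
  · have hu0 : u = 0 := by
      rw [← norm_eq_zero]; rw [h1] at hN; simpa using hN
    refine ⟨fun _ => 1, ?_⟩
    rw [Qm_bd _ ⟨⟨0, hi⟩, Or.inr rfl⟩, hxc, h1, hu0]
  · set s := (1 + a) / 2 with hs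
    have hs1 : s < 1 := by linarith
    have hs0 : 0 ≤ s := by linarith
    have hc := cc_pos hs1
    have hnu : ‖(cc s)⁻¹ • u‖ = s := by
      rw [norm_smul, norm_inv, Real.norm_eq_abs, abs_of_pos hc, inv_mul_eq_iff_eq_mul₀ hc.ne', cc_mul]
      have : 2 * s - 1 = a := by rw [hs]; ring
      rw [this]; linarith
    obtain ⟨y, hy⟩ := exists_yv ((cc s)⁻¹ • u) (by rw [hnu]; exact hs1.le)
    refine ⟨y, ?_⟩
    rw [Qm, hy, hnu, hxc, smul_inv_smul₀ hc.ne']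
    congr 1
    rw [hs]; ring

lemma Nn_smul {i : ℕ} (x : Fin (i+1) → ℝ) (r : ℝ) (hr : 0 ≤ r) : Nn (r • x) = r * Nn x := by
  have : Fin.tail (r • x) = r • Fin.tail x := rfl
  simp only [Nn, this, norm_smul, Pi.smul_apply, smul_eq_mul, abs_mul, Real.norm_eq_abs, abs_of_nonneg hr]
  ring

lemma Nn_zero {i : ℕ} : Nn (0 : Fin (i+1) → ℝ) = 0 := by
  have := Nn_smul (0 : Fin (i+1) → ℝ) 0 le_rfl
  simpa using this

lemma Nn_ge {i : ℕ} (x : Fin (i+1) → ℝ) : ‖x‖ ≤ Nn x := by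
  refine (pi_norm_le_iff_of_nonneg (by unfold Nn; positivity)).2 fun a => ?_
  unfold Nn
  refine Fin.cases ?_ (fun b => ?_) a
  · rw [Real.norm_eq_abs]; linarith [norm_nonneg (Fin.tail x)]
  · have : ‖x b.succ‖ ≤ ‖Fin.tail x‖ := norm_le_pi_norm (Fin.tail x) b
    linarith [abs_nonneg (x 0)]

lemma extend_pos {X : Type} [TopologicalSpace X] (i : ℕ) (hi : 1 ≤ i)
    (hπ : ∀ x : X, Subsingleton (HomotopyGroup (Fin i) X x))
    (ψ : (Fin (i+1) → ℝ) → X) (hψ : ContinuousOn ψ {0}ᶜ) :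
    ∃ F : (Fin (i+1) → ℝ) → X, Continuous F ∧ ∀ x, 1 ≤ ‖x‖ → F x = ψ x := by
  classical
  have hQ0 : ∀ y : Fin i → I, Qm y ≠ 0 := by
    intro y h
    have := Qm_Nn y
    rw [h] at this
    rw [Nn_zero] at this
    exact zero_ne_one this
  let p : C(Fin i → I, X) := ⟨fun y => ψ (Qm y),
    hψ.comp_continuous continuous_Qm (fun y => hQ0 y)⟩
  set x0 : X := ψ (Fin.cons 1 0) with hx0
  have hp : p ∈ GenLoop (Fin i) X x0 := by
    intro y hy
    show ψ (Qm y) = _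
    rw [Qm_bd y hy]
  have hhom : GenLoop.Homotopic (⟨p, hp⟩ : GenLoop (Fin i) X x0) GenLoop.const := by
    have h := hπ x0
    have := h.elim (Quotient.mk (GenLoop.Homotopic.setoid (Fin i) x0) ⟨p, hp⟩)
      (Quotient.mk (GenLoop.Homotopic.setoid (Fin i) x0) GenLoop.const)
    exact Quotient.exact this
  obtain ⟨H⟩ := hhom
  let M : I × (Fin i → I) → (Fin (i+1) → ℝ) := fun q => (1 - (q.1 : ℝ)) • Qm q.2
  have hM : Continuous M := by
    have := continuous_Qm (i := i)
    fun_prop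
  have hNM : ∀ q, Nn (M q) = 1 - q.1 := by
    intro q
    rw [Nn_smul _ _ (by linarith [q.1.2.2]), Qm_Nn, mul_one]
  have hfib : ∀ q q', M q = M q' → H q = H q' := by
    rintro ⟨t, y⟩ ⟨t', y'⟩ h
    have ht : t = t' := by
      have h1 := hNM (t, y)
      rw [h, hNM] at h1
      exact Subtype.ext (by simp at h1; linarith)
    subst ht
    by_cases h1 : t = 1
    · subst h1
      have e1 := H.apply_one y
      have e2 := H.apply_one y'
      rw [e1, e2]; rfl
    · have h2 : (1 - (t : ℝ)) ≠ 0 := by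
        intro h3; apply h1; exact Subtype.ext (by rw [Set.Icc.coe_one]; linarith)
      have h3 : Qm y = Qm y' := smul_right_injective _ h2 h
      rcases Qm_inj y y' h3 with h4 | ⟨h4, h5⟩
      · rw [h4]
      · have e1 := H.eq_fst t h4
        have e2 := H.eq_fst t h5
        rw [e1, e2]
        show p y = p y'
        rw [hp y h4, hp y' h5]
  have hrange : ∀ x, Nn x ≤ 1 → ∃ q, M q = x := by
    intro x hx
    have hnn : 0 ≤ Nn x := (norm_nonneg _).trans (Nn_ge x)
    rcases hnn.eq_or_lt with h0 | h0
    · refine ⟨(1, fun _ => 1), ?_⟩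
      have : x = 0 := by
        have := Nn_ge x
        rw [← h0] at this
        exact norm_le_zero_iff.1 this
      simp [M, this]
    · obtain ⟨y, hy⟩ := Qm_surj hi ((Nn x)⁻¹ • x) (by
        rw [Nn_smul _ _ (inv_nonneg.2 hnn), inv_mul_cancel₀ h0.ne'])
      refine ⟨(⟨1 - Nn x, by linarith, by linarith⟩, y), ?_⟩
      simp only [M, hy]
      rw [sub_sub_cancel, smul_inv_smul₀ h0.ne']
  let F0 : (Fin (i+1) → ℝ) → X := fun x => if h : ∃ q, M q = x then H h.choose else x0
  have hF0 : ∀ q, F0 (M q) = H q := by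
    intro q
    have h : ∃ q', M q' = M q := ⟨q, rfl⟩
    simp only [F0, dif_pos h]
    exact hfib _ _ h.choose_spec
  have hF0c : ContinuousOn F0 (Set.range M) := by
    refine contOn_range M hM F0 ?_
    have : F0 ∘ M = H := funext hF0
    rw [this]
    exact H.continuous
  have hF0b : ∀ x, Nn x = 1 → F0 x = ψ x := by
    intro x hx
    obtain ⟨y, rfl⟩ := Qm_surj hi x hx
    have e : Qm y = M (0, y) := by simp [M]
    have e1 := H.apply_zero y
    conv_lhs => rw [e, hF0, e1]
    rfl
  refine ⟨fun x => if Nn x ≤ 1 then F0 x else ψ x, ?_, ?_⟩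
  · refine continuous_if_le continuous_Nn continuous_const (hF0c.mono hrange) (hψ.mono ?_) hF0b
    rintro x hx rfl
    have hx' : (1:ℝ) ≤ Nn (0 : Fin (i+1) → ℝ) := hx
    rw [Nn_zero] at hx'
    linarith
  · intro x hx
    show (if Nn x ≤ 1 then F0 x else ψ x) = _
    split_ifs with h
    · exact hF0b x (le_antisymm h (hx.trans (Nn_ge x)))
    · rfl

lemma equivariant_step {X : Type} [TopologicalSpace X] (τ : X → X) (hτ : Continuous τ)
    (hττ : ∀ x, τ (τ x) = x) (d : ℕ) (ψ : (Fin (d+1) → ℝ) → X)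
    (hodd : ∀ x, x ≠ 0 → ψ (-x) = τ (ψ x))
    (F : (Fin (d+1) → ℝ) → X) (hF : Continuous F) (hFψ : ∀ x, 1 ≤ ‖x‖ → F x = ψ x) :
    ∃ ψ' : (Fin (d+2) → ℝ) → X, ContinuousOn ψ' {0}ᶜ ∧ ∀ x, x ≠ 0 → ψ' (-x) = τ (ψ' x) := by
  let w : (Fin (d+2) → ℝ) → (Fin (d+1) → ℝ) := fun x => ‖x‖⁻¹ • Fin.tail x
  have hw : ∀ x, w (-x) = - w x := by
    intro x
    have : Fin.tail (-x) = - Fin.tail x := rfl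
    simp [w, this]
  have hkey : ∀ x : Fin (d+2) → ℝ, x ≠ 0 → 0 = x 0 → F (w x) = τ (F (- w x)) := by
    intro x hx h0
    have hn : ‖x‖ ≤ ‖Fin.tail x‖ := by
      refine (pi_norm_le_iff_of_nonneg (norm_nonneg _)).2 fun a => ?_
      refine Fin.cases ?_ (fun b => ?_) a
      · rw [← h0]; simp
      · exact norm_le_pi_norm (Fin.tail x) b
    have hx' : 0 < ‖x‖ := norm_pos_iff.2 hx
    have h1 : 1 ≤ ‖w x‖ := by
      simp only [w, norm_smul, norm_inv, norm_norm]
      rw [inv_mul_eq_div, one_le_div hx']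
      exact hn
    have hne : w x ≠ 0 := by
      intro h; rw [h, norm_zero] at h1; linarith
    rw [hFψ _ h1, hFψ _ (by rwa [norm_neg]), hodd _ hne, hττ]
  refine ⟨fun x => if 0 ≤ x 0 then F (w x) else τ (F (- w x)), ?_, ?_⟩
  · have hwc : Continuous (fun x : ({0}ᶜ : Set (Fin (d+2) → ℝ)) => w x.1) := by
      have h1 : Continuous fun x : ({0}ᶜ : Set (Fin (d+2) → ℝ)) => Fin.tail x.1 :=
        Continuous.finTail continuous_subtype_val
      have h2 : Continuous fun x : ({0}ᶜ : Set (Fin (d+2) → ℝ)) => ‖x.1‖⁻¹ :=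
        Continuous.inv₀ continuous_subtype_val.norm (fun x => norm_ne_zero_iff.2 x.2)
      exact h2.smul h1
    rw [continuousOn_iff_continuous_domRestrict]
    refine continuous_if_le (f := fun _ : ({0}ᶜ : Set (Fin (d+2) → ℝ)) => (0:ℝ))
      (g := fun x => x.1 0) (f' := fun x => F (w x.1)) (g' := fun x => τ (F (- w x.1)))
      continuous_const ((continuous_apply 0).comp continuous_subtype_val) ?_ ?_ ?_
    · exact (hF.comp hwc).continuousOn
    · exact (hτ.comp (hF.comp hwc.neg)).continuousOn
    · intro x hx
      exact hkey x.1 x.2 hx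
  · intro x hx
    simp only [hw, neg_neg, Pi.neg_apply]
    rcases lt_trichotomy (x 0) 0 with h | h | h
    · rw [if_pos (by linarith), if_neg (by linarith), hττ]
    · rw [if_pos (by linarith), if_pos (by linarith), hkey x hx h.symm, hττ]
    · rw [if_neg (by linarith), if_pos (by linarith)]

lemma exists_equivariant {X : Type} [TopologicalSpace X] (τ : X → X) (hτ : Continuous τ)
    (hττ : ∀ x, τ (τ x) = x) (k : ℤ) (hX : KConnected k X) (d : ℕ) (hd : (d : ℤ) ≤ k + 1) :
    ∃ ψ : (Fin (d+1) → ℝ) → X, ContinuousOn ψ {0}ᶜ ∧ ∀ x, x ≠ 0 → ψ (-x) = τ (ψ x) := by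
  obtain ⟨⟨x0⟩, h0, hπ⟩ := hX
  induction d with
  | zero =>
    refine ⟨fun x => if 0 ≤ x 0 then x0 else τ x0, ?_, ?_⟩
    · rw [continuousOn_iff_continuous_domRestrict]
      refine continuous_if_le (f := fun _ : ({0}ᶜ : Set (Fin 1 → ℝ)) => (0:ℝ))
        (g := fun x => x.1 0) (f' := fun x => x0) (g' := fun x => τ x0)
        continuous_const ((continuous_apply 0).comp continuous_subtype_val) continuousOn_const continuousOn_const ?_
      intro x hx
      exfalso
      apply x.2
      funext i
      rw [Subsingleton.elim i 0]
      exact hx.symm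
    · intro x hx
      have hx0 : x 0 ≠ 0 := by
        intro h
        apply hx
        funext i
        rw [show i = 0 from Fin.ext (by omega)]
        exact h
      simp only [Pi.neg_apply]
      rcases lt_or_gt_of_ne hx0 with h | h
      · rw [if_pos (by linarith), if_neg (by linarith), hττ]
      · rw [if_neg (by linarith), if_pos (by linarith)]
  | succ d ih =>
    push_cast at hd
    obtain ⟨ψ, hψ, hodd⟩ := ih (by omega)
    obtain ⟨F, hF, hFψ⟩ : ∃ F : (Fin (d+1) → ℝ) → X, Continuous F ∧ ∀ x, 1 ≤ ‖x‖ → F x = ψ x := by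
      rcases Nat.eq_zero_or_pos d with rfl | hpos
      · have := h0 (by omega)
        exact extend_zero ψ hψ
      · exact extend_pos d hpos (hπ d hpos (by omega)) ψ hψ
    exact equivariant_step τ hτ hττ d ψ hodd F hF hFψ

end

/-- the swap involution on `Hom(K₂, H)` -/
def swapHom : GraphHom (completeGraph 2) (completeGraph 2) :=
  ⟨fun v => (1 - v : Fin 2), fun x y h => by
    change (x : Fin 2) ≠ y at h
    change (1 - x : Fin 2) ≠ 1 - y
    revert x y; decide⟩

/-- **Lovász' theorem.**  If `Hom(K₂, H)` is `k`-connected for a loopless graph `H` and some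
`k ≥ -1`, then `χ(H) ≥ k + 3`. -/
theorem lovasz_theorem (H : Graph) (hH : H.Loopless) (k : ℤ) (hk : -1 ≤ k)
    (hconn : KConnected k (HomComplex (completeGraph 2) H)) :
    k + 3 ≤ (chromaticNumber H : ℤ) := by
  classical
  by_contra! hlt
  have hne : {n : ℕ | Nonempty (GraphHom H (completeGraph n))}.Nonempty := by
    refine ⟨Fintype.card H.V, ⟨⟨fun v => Fintype.equivFin H.V v, ?_⟩⟩⟩
    intro x y hxy h
    have := (Fintype.equivFin H.V).injective h
    subst this
    exact hH x hxy
  obtain ⟨c⟩ : Nonempty (GraphHom H (completeGraph (chromaticNumber H))) := Nat.sInf_mem hne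
  generalize chromaticNumber H = n at c hlt
  -- the equivariant test map
  let g : HomComplex (completeGraph 2) H → Fin n → ℝ := fun f i =>
    ∑ w, if c.1 w = i then f.1 (0 : Fin 2) w - f.1 (1 : Fin 2) w else 0
  have hgc : Continuous g := by
    refine continuous_pi fun i => continuous_finsetSum _ fun w _ => ?_
    have h : ∀ v : Fin 2, Continuous fun f : HomComplex (completeGraph 2) H => f.1 v w := fun v =>
      (continuous_apply w).comp ((continuous_apply v).comp continuous_subtype_val)
    split_ifs
    · exact (h 0).sub (h 1)
    · exact continuous_const
  have hgsum : ∀ f, ∑ i, g f i = 0 := by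
    intro f
    simp only [g]
    rw [Finset.sum_comm]
    simp only [Finset.sum_ite_eq, Finset.mem_univ, if_true]
    rw [Finset.sum_sub_distrib, f.2.2.1 (0 : Fin 2), f.2.2.1 (1 : Fin 2), sub_self]
  have hg0 : ∀ f, g f ≠ 0 := by
    intro f h
    obtain ⟨a, ha⟩ : ∃ a, f.1 (0 : Fin 2) a ≠ 0 := by
      by_contra! hcon
      have := f.2.2.1 (0 : Fin 2)
      rw [Finset.sum_eq_zero (fun w _ => hcon w)] at this
      exact zero_ne_one this
    have h1 := congrFun h (c.1 a)
    have hnn : ∀ w, 0 ≤ (if c.1 w = c.1 a then f.1 (0 : Fin 2) w - f.1 (1 : Fin 2) w else 0) := by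
      intro w
      split_ifs with hw
      · have : f.1 (1 : Fin 2) w = 0 := by
          by_contra hcon
          have hadj := f.2.2.2 (0 : Fin 2) (1 : Fin 2) (by decide) a w ha hcon
          exact c.2 _ _ hadj hw.symm
        rw [this, sub_zero]
        exact f.2.1 _ _
      · exact le_rfl
    have h2 := (Finset.sum_eq_zero_iff_of_nonneg (fun w _ => hnn w)).1 h1 a (Finset.mem_univ a)
    rw [if_pos rfl] at h2
    have h3 : f.1 (1 : Fin 2) a = 0 := by
      by_contra hcon
      have hadj := f.2.2.2 (0 : Fin 2) (1 : Fin 2) (by decide) a a ha hcon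
      exact hH a hadj
    rw [h3, sub_zero] at h2
    exact ha h2
  have hgodd : ∀ f, g (precompHom swapHom H f) = - g f := by
    intro f
    funext i
    simp only [g, Pi.neg_apply]
    rw [← Finset.sum_neg_distrib]
    refine Finset.sum_congr rfl fun w _ => ?_
    split_ifs
    · show f.1 (1 - 0 : Fin 2) w - f.1 (1 - 1 : Fin 2) w = _
      simp
    · simp
  have hττ := precompHom_invol swapHom (fun v => by revert v; decide) H
  obtain ⟨f0⟩ := hconn.1
  cases n with
  | zero => exact hg0 f0 (Subsingleton.elim _ _)
  | succ m =>
    push_cast at hlt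
    obtain ⟨ψ, hψ, hodd⟩ := exists_equivariant (precompHom swapHom H)
      (precompHom swapHom H).continuous hττ k hconn m (by omega)
    obtain ⟨x, hx, hgx⟩ := borsuk_ulam m (fun x j => g (ψ x) j.castSucc) (by
      refine Continuous.comp_continuousOn (g := fun (y : HomComplex (completeGraph 2) H) (j : Fin m) => g y j.castSucc) ?_ hψ
      exact continuous_pi fun j => (continuous_apply _).comp hgc) (by
      intro x hx
      funext j
      simp only [hodd x hx, hgodd, Pi.neg_apply])
    apply hg0 (ψ x)
    have hs := hgsum (ψ x)
    rw [Fin.sum_univ_castSucc] at hs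
    have hz : ∀ j : Fin m, g (ψ x) j.castSucc = 0 := fun j => congrFun hgx j
    simp only [hz, Finset.sum_const_zero, zero_add] at hs
    funext i
    refine Fin.lastCases ?_ (fun j => ?_) i
    · exact hs
    · exact hz j

end Lovasz
end
end

section
/- For any integer m ≥ 2, the independence complex of the cycle C_m is homotopy equivalent to a wedge of two spheres S^{k−1} ∨ S^{k−1} if m = 3k, and to a single sphere S^{k−1} if m = 3k ± 1. -/
open Finset

noncomputable section
namespace Lovasz




/-- The `d`-dimensional sphere, as the unit sphere in `ℝ^{d+1}`. -/
abbrev nSphere (d : ℕ) : Type :=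
  (Metric.sphere (0 : EuclideanSpace ℝ (Fin (d+1))) 1 : Set (EuclideanSpace ℝ (Fin (d+1))))

/-- The antipodal involution of the `d`-sphere. -/
def nSphereNeg (d : ℕ) : C(nSphere d, nSphere d) where
  toFun x := ⟨-x.1, by
    have hx := x.2
    rw [Metric.mem_sphere, dist_zero_right] at hx ⊢
    rwa [norm_neg]⟩
  continuous_toFun := by
    apply Continuous.subtype_mk
    exact continuous_subtype_val.neg

lemma nSphereNeg_invol (d : ℕ) : ∀ x, nSphereNeg d (nSphereNeg d x) = x := by
  intro x
  apply Subtype.ext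
  show -(-x.1) = x.1
  exact neg_neg _

/-- A base point on the `d`-sphere. -/
def northPole (d : ℕ) : nSphere d :=
  ⟨EuclideanSpace.single (0 : Fin (d+1)) (1 : ℝ), by
    rw [Metric.mem_sphere, dist_zero_right, EuclideanSpace.norm_single]
    norm_num⟩

/-- The setoid gluing `m` spheres of dimension `d` at their base points. -/
def wedgeSetoid (m d : ℕ) : Setoid (Fin m × nSphere d) where
  r a b := a = b ∨ (a.2 = northPole d ∧ b.2 = northPole d)
  iseqv := by
    constructor
    · exact fun a => Or.inl rfl
    · rintro a b (rfl | ⟨h1, h2⟩)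
      · exact Or.inl rfl
      · exact Or.inr ⟨h2, h1⟩
    · rintro a b c (rfl | ⟨h1, h2⟩) (rfl | ⟨h3, h4⟩)
      · exact Or.inl rfl
      · exact Or.inr ⟨h3, h4⟩
      · exact Or.inr ⟨h1, h2⟩
      · exact Or.inr ⟨h1, h4⟩

/-- The wedge (one-point union) of `m` copies of the `d`-sphere. -/
abbrev WedgeOfSpheres (m d : ℕ) : Type := Quotient (wedgeSetoid m d)

/-- The setoid for the topological join `X * Y` on `X × Y × [0,1]`:
at time `0` collapse `Y`, at time `1` collapse `X`. -/
def joinSetoid (X Y : Type) [TopologicalSpace X] [TopologicalSpace Y] :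
    Setoid (X × Y × unitInterval) where
  r a b := a = b ∨ (a.2.2 = 0 ∧ b.2.2 = 0 ∧ a.1 = b.1) ∨ (a.2.2 = 1 ∧ b.2.2 = 1 ∧ a.2.1 = b.2.1)
  iseqv := by
    constructor
    · exact fun a => Or.inl rfl
    · rintro a b (rfl | ⟨h1, h2, h3⟩ | ⟨h1, h2, h3⟩)
      · exact Or.inl rfl
      · exact Or.inr (Or.inl ⟨h2, h1, h3.symm⟩)
      · exact Or.inr (Or.inr ⟨h2, h1, h3.symm⟩)
    · rintro a b c (rfl | ⟨h1, h2, h3⟩ | ⟨h1, h2, h3⟩) (rfl | ⟨h4, h5, h6⟩ | ⟨h4, h5, h6⟩)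
      · exact Or.inl rfl
      · exact Or.inr (Or.inl ⟨h4, h5, h6⟩)
      · exact Or.inr (Or.inr ⟨h4, h5, h6⟩)
      · exact Or.inr (Or.inl ⟨h1, h2, h3⟩)
      · exact Or.inr (Or.inl ⟨h1, h5, h3.trans h6⟩)
      · exact absurd (congrArg Subtype.val (h4.symm.trans h2))
          (by simp)
      · exact Or.inr (Or.inr ⟨h1, h2, h3⟩)
      · exact absurd (congrArg Subtype.val (h2.symm.trans h4))
          (by simp)
      · exact Or.inr (Or.inr ⟨h1, h5, h3.trans h6⟩)

/-- The topological join `X * Y`. -/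
abbrev TopJoin (X Y : Type) [TopologicalSpace X] [TopologicalSpace Y] : Type :=
  Quotient (joinSetoid X Y)

/-- A continuous map is a homotopy equivalence. -/
def IsHomotopyEquiv {X Y : Type} [TopologicalSpace X] [TopologicalSpace Y] (f : C(X, Y)) : Prop :=
  ∃ g : C(Y, X), (g.comp f).Homotopic (ContinuousMap.id X) ∧
    (f.comp g).Homotopic (ContinuousMap.id Y)

/-- A `ℤ/2`-equivariant homotopy equivalence between spaces with involutions, where all maps and
homotopies are equivariant. -/
def IsZ2HomotopyEquiv {X Y : Type} [TopologicalSpace X] [TopologicalSpace Y]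
    (τ : C(X, X)) (ρ : C(Y, Y)) : Prop :=
  ∃ (f : C(X, Y)) (g : C(Y, X)),
    (∀ x, f (τ x) = ρ (f x)) ∧ (∀ y, g (ρ y) = τ (g y)) ∧
    (∃ H : (g.comp f).Homotopy (ContinuousMap.id X), ∀ x t, H (t, τ x) = τ (H (t, x))) ∧
    (∃ K : (f.comp g).Homotopy (ContinuousMap.id Y), ∀ y t, K (t, ρ y) = ρ (K (t, y)))


lemma homotopic_of_segment {X V : Type} [TopologicalSpace X] [TopologicalSpace V] [AddCommGroup V]
    [Module ℝ V] [ContinuousAdd V] [ContinuousSMul ℝ V] (S : Set V) (u v : C(X, S))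
    (h : ∀ x, ∀ t : ℝ, 0 ≤ t → t ≤ 1 → (1 - t) • (u x : V) + t • (v x : V) ∈ S) :
    u.Homotopic v := by
  refine ⟨⟨⟨fun q => ⟨(1 - (q.1 : ℝ)) • (u q.2 : V) + (q.1 : ℝ) • (v q.2 : V),
    h q.2 q.1 q.1.2.1 q.1.2.2⟩, ?_⟩, ?_, ?_⟩⟩
  · fun_prop
  · intro x; apply Subtype.ext; simp
  · intro x; apply Subtype.ext; simp

def Kc (p : ℕ) : Set (ℕ → ℝ) :=
  {f | (∀ i, 0 ≤ f i) ∧ (∀ i, i < p → f i = 0 ∨ f (i + 1) = 0) ∧ (f 0 = 0 ∨ f p = 0) ∧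
    ∀ i, p < i → f i = 0}

def Yc (p : ℕ) (E : Type) [Zero E] : Set ((ℕ → ℝ) × E) := {z | z.1 ∈ Kc p ∧ z ≠ 0}

lemma Kc_seg {p : ℕ} {u v : ℕ → ℝ} (hu : u ∈ Kc p) (hv : v ∈ Kc p)
    (h1 : ∀ i, i < p → (u i = 0 ∧ v i = 0) ∨ (u (i + 1) = 0 ∧ v (i + 1) = 0))
    (h2 : (u 0 = 0 ∧ v 0 = 0) ∨ (u p = 0 ∧ v p = 0)) (t : ℝ) (h0 : 0 ≤ t) (ht : t ≤ 1) :
    (1 - t) • u + t • v ∈ Kc p := by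
  refine ⟨fun i => ?_, fun i hi => ?_, ?_, fun i hi => ?_⟩
  · have := hu.1 i
    have := hv.1 i
    have : 0 ≤ 1 - t := by linarith
    simp only [Pi.add_apply, Pi.smul_apply, smul_eq_mul]
    positivity
  · rcases h1 i hi with ⟨a, b⟩ | ⟨a, b⟩
    · left; simp [a, b]
    · right; simp [a, b]
  · rcases h2 with ⟨a, b⟩ | ⟨a, b⟩
    · left; simp [a, b]
    · right; simp [a, b]
  · simp [hu.2.2.2 i hi, hv.2.2.2 i hi]

lemma seg_nonneg_zero {a b t : ℝ} (ha : 0 ≤ a) (hb : 0 ≤ b) (h0 : 0 < t) (h1 : t < 1)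
    (h : (1 - t) * a + t * b = 0) : a = 0 ∧ b = 0 := by
  have h1' : 0 < 1 - t := by linarith
  have := mul_nonneg h1'.le ha
  have := mul_nonneg h0.le hb
  constructor
  · have : (1 - t) * a = 0 := by linarith
    rcases mul_eq_zero.1 this with h | h <;> linarith
  · have : t * b = 0 := by linarith
    rcases mul_eq_zero.1 this with h | h <;> linarith

lemma Yc_seg {p : ℕ} {E : Type} [AddCommGroup E] [Module ℝ E] {u v : (ℕ → ℝ) × E}
    (hu : u ∈ Yc p E) (hv : v ∈ Yc p E) (he : u.2 = v.2)
    (h1 : ∀ i, i < p → (u.1 i = 0 ∧ v.1 i = 0) ∨ (u.1 (i + 1) = 0 ∧ v.1 (i + 1) = 0))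
    (h2 : (u.1 0 = 0 ∧ v.1 0 = 0) ∨ (u.1 p = 0 ∧ v.1 p = 0)) (t : ℝ) (h0 : 0 ≤ t) (ht : t ≤ 1) :
    (1 - t) • u + t • v ∈ Yc p E := by
  refine ⟨Kc_seg hu.1 hv.1 h1 h2 t h0 ht, fun hz => ?_⟩
  rcases eq_or_lt_of_le h0 with rfl | h0
  · simp at hz; exact hu.2 hz
  rcases eq_or_lt_of_le ht with rfl | ht
  · simp at hz; exact hv.2 hz
  apply hu.2
  ext i
  · have := congrFun (congrArg Prod.fst hz) i
    exact (seg_nonneg_zero (hu.1.1 i) (hv.1.1 i) h0 ht this).1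
  · have := congrArg Prod.snd hz
    simp only [Prod.snd_add, Prod.smul_snd, ← he, ← add_smul] at this
    simpa using this

def phiF (p : ℕ) (f : ℕ → ℝ) : ℕ → ℝ := fun i =>
  if i = 0 ∨ i = p then f i - min (f 0) (f p) else if i < p then f i else 0

def phiT (p : ℕ) (f : ℕ → ℝ) : ℝ := f (p + 2) + min (f 0) (f p) - f (p + 1) - f (p + 3)

def psiF (p : ℕ) (g : ℕ → ℝ) (t : ℝ) : ℕ → ℝ := fun i =>
  if i = 0 ∨ i = p then max (g i - max (-t) 0) 0 else if i < p then g i else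
  if i = p + 1 then max (max (-t) 0 - g p) 0 else
  if i = p + 2 then max t 0 else
  if i = p + 3 then max (max (-t) 0 - g 0) 0 else 0

def midF (p : ℕ) (f : ℕ → ℝ) : ℕ → ℝ := fun i =>
  if i = p + 1 ∨ i = p + 3 then f i else psiF p (phiF p f) (phiT p f) i

lemma Kc_nz {p : ℕ} {f : ℕ → ℝ} (hf : f ∈ Kc p) (h : ∀ i, i ≤ p → f i = 0) : f = 0 := by
  ext i
  rcases le_or_gt i p with hi | hi
  · exact h i hi
  · exact hf.2.2.2 i hi

lemma Kc3 {p : ℕ} {f : ℕ → ℝ} (hf : f ∈ Kc (p + 3)) :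
  (∀ i, 0 ≤ f i) ∧ (∀ i, i < p → f i = 0 ∨ f (i + 1) = 0) ∧ (f p = 0 ∨ f (p+1) = 0) ∧
  (f (p+1) = 0 ∨ f (p+2) = 0) ∧ (f (p+2) = 0 ∨ f (p+3) = 0) ∧ (f 0 = 0 ∨ f (p+3) = 0) ∧
  ∀ i, p + 3 < i → f i = 0 :=
  ⟨hf.1, fun i hi => hf.2.1 i (by omega), hf.2.1 p (by omega), hf.2.1 (p+1) (by omega),
   hf.2.1 (p+2) (by omega), hf.2.2.1, hf.2.2.2⟩

lemma Kc3_mk {p : ℕ} {f : ℕ → ℝ} (h0 : ∀ i, 0 ≤ f i)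
  (h1 : ∀ i, i < p → f i = 0 ∨ f (i + 1) = 0) (h2 : f p = 0 ∨ f (p+1) = 0)
  (h3 : f (p+1) = 0 ∨ f (p+2) = 0) (h4 : f (p+2) = 0 ∨ f (p+3) = 0) (h5 : f 0 = 0 ∨ f (p+3) = 0)
  (h6 : ∀ i, p + 3 < i → f i = 0) : f ∈ Kc (p + 3) := by
  refine ⟨h0, fun i hi => ?_, h5, h6⟩
  have : i < p ∨ i = p ∨ i = p + 1 ∨ i = p + 2 := by omega
  rcases this with h | rfl | rfl | rfl
  · exact h1 i h
  · exact h2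
  · exact h3
  · exact h4

lemma phiF_mem {p : ℕ} {f : ℕ → ℝ} (hf : f ∈ Kc (p + 3)) : phiF p f ∈ Kc p := by
  obtain ⟨h0, h1, h2, h3, h4, h5, h6⟩ := Kc3 hf
  have a0 := h0 0
  have ap := h0 p
  refine ⟨fun i => ?_, fun i hi => ?_, ?_, fun i hi => ?_⟩
  · have := h0 i
    unfold phiF; grind
  · have := h1 i hi
    have := h0 i
    have := h0 (i+1)
    unfold phiF; grind
  · unfold phiF; grind
  · unfold phiF; grind

lemma psiF_mem {p : ℕ} {g : ℕ → ℝ} (t : ℝ) (hg : g ∈ Kc p) : psiF p g t ∈ Kc (p + 3) := by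
  obtain ⟨h0, h1, h2, h3⟩ := hg
  have a0 := h0 0
  have ap := h0 p
  apply Kc3_mk
  · intro i
    have := h0 i
    unfold psiF; grind
  · intro i hi
    have := h1 i hi
    have := h0 i
    have := h0 (i+1)
    unfold psiF; grind
  all_goals (unfold psiF; grind)

lemma midF_mem {p : ℕ} {f : ℕ → ℝ} (hf : f ∈ Kc (p + 3)) : midF p f ∈ Kc (p + 3) := by
  have H := psiF_mem (phiT p f) (phiF_mem hf)
  obtain ⟨k0, k1, k2, k3, k4, k5, k6⟩ := Kc3 H
  obtain ⟨h0, h1, h2, h3, h4, h5, h6⟩ := Kc3 hf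
  have a0 := h0 0
  have ap := h0 p
  have a1 := h0 (p+1)
  have a2 := h0 (p+2)
  have a3 := h0 (p+3)
  apply Kc3_mk
  · intro i
    have := h0 i
    have := k0 i
    unfold midF; grind
  · intro i hi
    have := k1 i hi
    unfold midF; grind
  · unfold midF psiF phiT phiF; grind
  · unfold midF psiF phiT phiF; grind
  · unfold midF psiF phiT phiF; grind
  · unfold midF psiF phiT phiF; grind
  · intro i hi
    have := k6 i hi
    unfold midF; grind

lemma phi_nz {p : ℕ} {f : ℕ → ℝ} (hf : f ∈ Kc (p + 3)) (h : phiF p f = 0) (ht : phiT p f = 0) :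
    f = 0 := by
  obtain ⟨h0, h1, h2, h3, h4, h5, h6⟩ := Kc3 hf
  have a0 := h0 0
  have ap := h0 p
  have a1 := h0 (p+1)
  have a2 := h0 (p+2)
  have a3 := h0 (p+3)
  have e0 := congrFun h 0
  have ep := congrFun h p
  have key : f 0 = 0 ∧ f p = 0 ∧ f (p+1) = 0 ∧ f (p+2) = 0 ∧ f (p+3) = 0 := by
    simp [phiF] at e0 ep
    unfold phiT at ht
    grind
  ext i
  have e := congrFun h i
  have := h6 i
  simp only [phiF, Pi.zero_apply] at e ⊢
  have : i = 0 ∨ i = p ∨ (i ≠ 0 ∧ i ≠ p ∧ i < p) ∨ i = p+1 ∨ i = p+2 ∨ i = p+3 ∨ p + 3 < i := by omega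
  grind

lemma psi_nz {p : ℕ} {g : ℕ → ℝ} {t : ℝ} (hg : g ∈ Kc p) (h : psiF p g t = 0) :
    g = 0 ∧ t = 0 := by
  obtain ⟨h0, h1, h2, h3⟩ := hg
  have a0 := h0 0
  have ap := h0 p
  have e0 := congrFun h 0
  have ep := congrFun h p
  have e1 := congrFun h (p+1)
  have e2 := congrFun h (p+2)
  have e3 := congrFun h (p+3)
  have key : g 0 = 0 ∧ g p = 0 ∧ t = 0 := by
    simp [psiF] at e0 ep e1 e2 e3
    grind
  refine ⟨?_, key.2.2⟩
  ext i
  have e := congrFun h i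
  have := h3 i
  simp only [psiF, Pi.zero_apply] at e ⊢
  grind

lemma mid_nz {p : ℕ} {f : ℕ → ℝ} (hf : f ∈ Kc (p + 3)) (h : midF p f = 0) : f = 0 := by
  obtain ⟨h0, h1, h2, h3, h4, h5, h6⟩ := Kc3 hf
  have a0 := h0 0
  have ap := h0 p
  have a1 := h0 (p+1)
  have a2 := h0 (p+2)
  have a3 := h0 (p+3)
  have e1 := congrFun h (p+1)
  have e2 := congrFun h (p+2)
  have e3 := congrFun h (p+3)
  have k1 : f (p+1) = 0 := by simpa [midF] using e1
  have k3 : f (p+3) = 0 := by simpa [midF] using e3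
  have k2 : max (f (p+2) + min (f 0) (f p)) 0 = 0 := by
    simp [midF, psiF, phiT, k1, k3] at e2; simpa using e2
  have hps : psiF p (phiF p f) (phiT p f) = 0 := by
    ext i
    have e := congrFun h i
    simp only [midF, Pi.zero_apply] at e ⊢
    split_ifs at e with hi
    · rcases hi with rfl | rfl
      · simp [psiF, phiF, phiT, k1, k3]; grind
      · simp [psiF, phiF, phiT, k1, k3]; grind
    · exact e
  obtain ⟨q1, q2⟩ := psi_nz (phiF_mem hf) hps
  exact phi_nz hf q1 q2

lemma cont_phiF (p : ℕ) : Continuous (phiF p) := by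
  refine continuous_pi fun i => ?_
  unfold phiF
  split_ifs <;> fun_prop

lemma cont_phiT (p : ℕ) : Continuous (phiT p) := by
  unfold phiT; fun_prop

lemma cont_psiF (p : ℕ) : Continuous (fun q : (ℕ → ℝ) × ℝ => psiF p q.1 q.2) := by
  refine continuous_pi fun i => ?_
  unfold psiF
  split_ifs <;> fun_prop

lemma cont_midF (p : ℕ) : Continuous (midF p) := by
  refine continuous_pi fun i => ?_
  unfold midF
  split_ifs
  · fun_prop
  · exact (continuous_apply i).comp ((cont_psiF p).comp ((cont_phiF p).prodMk (cont_phiT p)))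

lemma seg_phipsi {p : ℕ} {E : Type} [AddCommGroup E] [Module ℝ E] {g : ℕ → ℝ} {s : ℝ} {v : E}
    (h : (g, (s, v)) ∈ Yc p (ℝ × E)) (h' : (phiF p (psiF p g s), (phiT p (psiF p g s), v)) ∈ Yc p (ℝ × E))
    (t : ℝ) (h0 : 0 ≤ t) (h1 : t ≤ 1) :
    (1 - t) • ((phiF p (psiF p g s), (phiT p (psiF p g s), v)) : (ℕ → ℝ) × ℝ × E) + t • (g, (s, v))
      ∈ Yc p (ℝ × E) := by
  obtain ⟨hg, hnz⟩ := id h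
  obtain ⟨k0, k1, k2, k3⟩ := id hg
  have a0 := k0 0
  have ap := k0 p
  refine ⟨Kc_seg h'.1 h.1 ?_ ?_ t h0 h1, fun hz => ?_⟩
  · intro i hi
    have := k1 i hi
    have := k0 i
    have := k0 (i+1)
    dsimp only [phiF, psiF]
    grind
  · dsimp only [phiF, psiF]
    grind
  · rcases eq_or_lt_of_le h0 with rfl | h0
    · simp only [sub_zero, one_smul, zero_smul, add_zero] at hz; exact h'.2 hz
    rcases eq_or_lt_of_le h1 with rfl | ht
    · simp only [sub_self, zero_smul, one_smul, zero_add] at hz; exact h.2 hz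
    have hg0 : g = 0 := by
      ext i
      have := congrFun (congrArg Prod.fst hz) i
      exact (seg_nonneg_zero (h'.1.1 i) (h.1.1 i) h0 ht this).2
    apply hnz
    have hv := congrArg (fun q => q.2.2) hz
    have hs := congrArg (fun q => q.2.1) hz
    simp only [Prod.snd_add, Prod.smul_snd, ← add_smul, Prod.snd_zero, Prod.fst_add, Prod.smul_fst,
      Prod.fst_zero] at hv hs
    have hv' : v = 0 := by simpa using hv
    have hs' : s = 0 := by
      subst hg0
      simp only [phiT, psiF, smul_eq_mul] at hs
      simp at hs
      rcases le_total s 0 with h | h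
      · rw [max_eq_left (by linarith : (0:ℝ) ≤ -s)] at hs
        nlinarith
      · rw [max_eq_right (by linarith : -s ≤ (0:ℝ))] at hs
        nlinarith
    simp [hg0, hv', hs']

lemma step {p : ℕ} {E : Type} [AddCommGroup E] [Module ℝ E] [TopologicalSpace E]
    [ContinuousAdd E] [ContinuousSMul ℝ E] :
    Nonempty (ContinuousMap.HomotopyEquiv (Yc (p+3) E) (Yc p (ℝ × E))) := by
  have cp := cont_phiF p
  have ct := cont_phiT p
  have cs := cont_psiF p
  have cm := cont_midF p
  let φ : C(Yc (p+3) E, Yc p (ℝ × E)) :=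
    ⟨fun z => ⟨(phiF p z.1.1, (phiT p z.1.1, z.1.2)), phiF_mem z.2.1, fun h => z.2.2 (by
      simp only [Prod.mk_eq_zero] at h
      exact Prod.ext (phi_nz z.2.1 h.1 h.2.1) h.2.2)⟩, by fun_prop⟩
  let ψ : C(Yc p (ℝ × E), Yc (p+3) E) :=
    ⟨fun z => ⟨(psiF p z.1.1 z.1.2.1, z.1.2.2), psiF_mem _ z.2.1, fun h => z.2.2 (by
      simp only [Prod.mk_eq_zero] at h
      have := psi_nz z.2.1 h.1
      exact Prod.ext this.1 (Prod.ext this.2 h.2))⟩, by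
        have : Continuous (fun z : Yc p (ℝ × E) => psiF p z.1.1 z.1.2.1) :=
          cs.comp (by fun_prop : Continuous (fun z : Yc p (ℝ × E) => (z.1.1, z.1.2.1)))
        fun_prop⟩
  let μ : C(Yc (p+3) E, Yc (p+3) E) :=
    ⟨fun z => ⟨(midF p z.1.1, z.1.2), midF_mem z.2.1, fun h => z.2.2 (by
      simp only [Prod.mk_eq_zero] at h
      exact Prod.ext (mid_nz z.2.1 h.1) h.2)⟩, by fun_prop⟩
  refine ⟨⟨φ, ψ, ?_, ?_⟩⟩
  · refine ContinuousMap.Homotopic.trans (g := μ) ?_ ?_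
    · apply homotopic_of_segment
      intro z
      have H1 := (ψ (φ z)).2
      have H2 := (μ z).2
      obtain ⟨h0, h1, h2, h3, h4, h5, h6⟩ := Kc3 z.2.1
      obtain ⟨k0, k1, k2, k3, k4, k5, k6⟩ := Kc3 H1.1
      have a0 := h0 0
      have ap := h0 p
      have a1 := h0 (p+1)
      have a2 := h0 (p+2)
      have a3 := h0 (p+3)
      refine Yc_seg H1 H2 rfl ?_ ?_
      · intro i hi
        change (psiF p (phiF p z.1.1) (phiT p z.1.1) i = 0 ∧ midF p z.1.1 i = 0) ∨
          (psiF p (phiF p z.1.1) (phiT p z.1.1) (i+1) = 0 ∧ midF p z.1.1 (i+1) = 0)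
        have : i < p ∨ i = p ∨ i = p + 1 ∨ i = p + 2 := by omega
        rcases this with h | rfl | rfl | rfl
        · have := k1 i h
          change psiF p (phiF p z.1.1) (phiT p z.1.1) i = 0 ∨
            psiF p (phiF p z.1.1) (phiT p z.1.1) (i+1) = 0 at this
          unfold midF
          grind
        all_goals (unfold midF psiF phiT phiF; grind)
      · change (psiF p (phiF p z.1.1) (phiT p z.1.1) 0 = 0 ∧ midF p z.1.1 0 = 0) ∨
          (psiF p (phiF p z.1.1) (phiT p z.1.1) (p+3) = 0 ∧ midF p z.1.1 (p+3) = 0)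
        unfold midF psiF phiT phiF; grind
    · apply homotopic_of_segment
      intro z
      have H2 := (μ z).2
      obtain ⟨h0, h1, h2, h3, h4, h5, h6⟩ := Kc3 z.2.1
      have a0 := h0 0
      have ap := h0 p
      have a1 := h0 (p+1)
      have a2 := h0 (p+2)
      have a3 := h0 (p+3)
      refine Yc_seg H2 z.2 rfl ?_ ?_
      · intro i hi
        change (midF p z.1.1 i = 0 ∧ z.1.1 i = 0) ∨
          (midF p z.1.1 (i+1) = 0 ∧ z.1.1 (i+1) = 0)
        have : i < p ∨ i = p ∨ i = p + 1 ∨ i = p + 2 := by omega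
        rcases this with h | rfl | rfl | rfl
        · have := h1 i h
          have := h0 i
          have := h0 (i+1)
          unfold midF psiF phiF
          grind
        all_goals (unfold midF psiF phiT phiF; grind)
      · change (midF p z.1.1 0 = 0 ∧ z.1.1 0 = 0) ∨
          (midF p z.1.1 (p+3) = 0 ∧ z.1.1 (p+3) = 0)
        unfold midF psiF phiT phiF; grind
  · apply homotopic_of_segment
    intro z
    exact seg_phipsi z.2 (φ (ψ z)).2


lemma Yc_congr {p : ℕ} {E F : Type} [AddCommGroup E] [Module ℝ E] [TopologicalSpace E]
    [AddCommGroup F] [Module ℝ F] [TopologicalSpace F] (L : E ≃L[ℝ] F) :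
    Nonempty (ContinuousMap.HomotopyEquiv (Yc p E) (Yc p F)) := by
  refine ⟨Homeomorph.toHomotopyEquiv
    { toFun := fun z => ⟨(z.1.1, L z.1.2), z.2.1, fun h => z.2.2 ?_⟩
      invFun := fun z => ⟨(z.1.1, L.symm z.1.2), z.2.1, fun h => z.2.2 ?_⟩
      left_inv := fun z => by simp
      right_inv := fun z => by simp
      continuous_toFun := by fun_prop
      continuous_invFun := by fun_prop }⟩
  · simp only [Prod.mk_eq_zero, map_eq_zero_iff L L.injective] at h
    exact Prod.ext h.1 h.2
  · simp only [Prod.mk_eq_zero, map_eq_zero_iff L.symm L.symm.injective] at h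
    exact Prod.ext h.1 h.2

lemma iter (p k : ℕ) : ∀ (E F : Type) [NormedAddCommGroup E] [NormedSpace ℝ E]
    [FiniteDimensional ℝ E] [NormedAddCommGroup F] [NormedSpace ℝ F] [FiniteDimensional ℝ F],
    Module.finrank ℝ F = Module.finrank ℝ E + k →
    Nonempty (ContinuousMap.HomotopyEquiv (Yc (p + 3 * k) E) (Yc p F)) := by
  induction k with
  | zero =>
    intro E F _ _ _ _ _ _ h
    exact Yc_congr (ContinuousLinearEquiv.ofFinrankEq (by omega))
  | succ k ih =>
    intro E F _ _ _ _ _ _ h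
    obtain ⟨e1⟩ := step (p := p + 3 * k) (E := E)
    obtain ⟨e2⟩ := ih (ℝ × E) F (by simp; omega)
    exact ⟨e1.trans e2⟩

lemma base0 (d : ℕ) : Nonempty (ContinuousMap.HomotopyEquiv
    (Yc 0 (EuclideanSpace ℝ (Fin (d+1)))) (nSphere d)) := by
  have hz0 : ∀ z : Yc 0 (EuclideanSpace ℝ (Fin (d+1))), z.1.1 = 0 := fun z => by
    refine Kc_nz z.2.1 fun i hi => ?_
    obtain rfl : i = 0 := by omega
    have := z.2.1.2.2.1
    tauto
  have hz : ∀ z : Yc 0 (EuclideanSpace ℝ (Fin (d+1))), z.1.2 ≠ 0 := fun z h =>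
    z.2.2 (Prod.ext (hz0 z) h)
  have hn : ∀ z : Yc 0 (EuclideanSpace ℝ (Fin (d+1))), ‖z.1.2‖ ≠ 0 := fun z =>
    norm_ne_zero_iff.2 (hz z)
  have hK : (0 : ℕ → ℝ) ∈ Kc 0 := ⟨fun _ => le_rfl, fun _ _ => Or.inl rfl, Or.inl rfl, fun _ _ => rfl⟩
  have hs : ∀ x : nSphere d, x.1 ≠ 0 := fun x h => by
    have := x.2
    rw [mem_sphere_zero_iff_norm, h] at this
    simp at this
  let F : C(Yc 0 (EuclideanSpace ℝ (Fin (d+1))), nSphere d) :=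
    ⟨fun z => ⟨‖z.1.2‖⁻¹ • z.1.2, by
      rw [mem_sphere_zero_iff_norm, norm_smul, norm_inv, norm_norm, inv_mul_cancel₀ (hn z)]⟩, by
      apply Continuous.subtype_mk
      exact Continuous.smul (Continuous.inv₀ (by fun_prop) hn) (by fun_prop)⟩
  let G : C(nSphere d, Yc 0 (EuclideanSpace ℝ (Fin (d+1)))) :=
    ⟨fun x => ⟨(0, x.1), hK, fun h => hs x (congrArg Prod.snd h)⟩, by fun_prop⟩
  refine ⟨⟨F, G, ?_, ?_⟩⟩
  · apply homotopic_of_segment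
    intro z t h0 h1
    refine ⟨?_, fun h => ?_⟩
    · have : ((1 - t) • ((G.comp F) z).1 + t • z.1).1 = 0 := by
        simp only [Prod.fst_add, Prod.smul_fst, hz0, smul_zero, add_zero]
      change ((1 - t) • ((G.comp F) z).1 + t • z.1).1 ∈ Kc 0
      rw [this]; exact hK
    · have h2 := congrArg Prod.snd h
      change (1 - t) • (‖z.1.2‖⁻¹ • z.1.2) + t • z.1.2 = 0 at h2
      rw [smul_smul, ← add_smul] at h2
      rcases smul_eq_zero.1 h2 with h3 | h3
      · have h4 : 0 < ‖z.1.2‖⁻¹ := by have := hz z; positivity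
        have : 0 ≤ (1 - t) * ‖z.1.2‖⁻¹ := mul_nonneg (by linarith) h4.le
        have : t = 0 := by linarith
        subst this
        simp at h3
        exact hz z h3
      · exact hz z h3
  · have : F.comp G = ContinuousMap.id _ := by
      ext1 x
      apply Subtype.ext
      have hx := x.2
      rw [mem_sphere_zero_iff_norm] at hx
      change ‖x.1‖⁻¹ • x.1 = x.1
      rw [hx]; simp
    rw [this]

lemma base1 (E : Type) [AddCommGroup E] [Module ℝ E] [TopologicalSpace E] :
    Nonempty (ContinuousMap.HomotopyEquiv (Yc 1 E) (Yc 0 (ℝ × E))) := by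
  have hK : (0 : ℕ → ℝ) ∈ Kc 0 := ⟨fun _ => le_rfl, fun _ _ => Or.inl rfl, Or.inl rfl, fun _ _ => rfl⟩
  have hz0 : ∀ z : Yc 0 (ℝ × E), z.1.1 = 0 := fun z => by
    refine Kc_nz z.2.1 fun i hi => ?_
    obtain rfl : i = 0 := by omega
    have := z.2.1.2.2.1
    tauto
  let B : ℝ → ℕ → ℝ := fun r i => if i = 0 then max r 0 else if i = 1 then max (-r) 0 else 0
  have cB : Continuous B := by
    refine continuous_pi fun i => ?_
    simp only [B]
    split_ifs <;> fun_prop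
  have hB : ∀ r, B r ∈ Kc 1 := fun r => by
    refine ⟨fun i => ?_, fun i hi => ?_, ?_, fun i hi => ?_⟩ <;> simp only [B] <;> grind
  have hBB : ∀ f ∈ Kc 1, B (f 0 - f 1) = f := by
    intro f hf
    have h0 := hf.1 0
    have h1 := hf.1 1
    have h2 := hf.2.2.1
    ext i
    have := hf.2.2.2 i
    simp only [B]
    grind
  refine ⟨Homeomorph.toHomotopyEquiv
    { toFun := fun z => ⟨(0, (z.1.1 0 - z.1.1 1, z.1.2)), hK, fun h => z.2.2 ?_⟩
      invFun := fun z => ⟨(B z.1.2.1, z.1.2.2), hB _, fun h => z.2.2 ?_⟩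
      left_inv := fun z => ?_
      right_inv := fun z => ?_
      continuous_toFun := by fun_prop
      continuous_invFun := by fun_prop }⟩
  · simp only [Prod.mk_eq_zero] at h
    refine Prod.ext ?_ h.2.2
    have := hBB _ z.2.1
    rw [h.2.1] at this
    rw [← this]
    ext i
    simp [B]
  · simp only [Prod.mk_eq_zero] at h
    refine Prod.ext (hz0 z) (Prod.ext ?_ h.2)
    have e0 := congrFun h.1 0
    have e1 := congrFun h.1 1
    simp [B] at e0 e1
    exact le_antisymm e0 e1
  · apply Subtype.ext
    exact Prod.ext (hBB _ z.2.1) rfl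
  · apply Subtype.ext
    refine Prod.ext (hz0 z).symm (Prod.ext ?_ rfl)
    simp only [B]
    grind

lemma zmod_succ (p : ℕ) (x : ZMod (p+1)) :
    (x.val < p ∧ (x+1).val = x.val + 1) ∨ (x.val = p ∧ (x+1).val = 0) := by
  have h := ZMod.val_lt x
  rcases Nat.lt_or_ge x.val p with h' | h'
  · left
    refine ⟨h', ?_⟩
    have h3 : x + 1 = ((x.val + 1 : ℕ) : ZMod (p+1)) := by
      push_cast; rw [ZMod.natCast_zmod_val]
    rw [h3, ZMod.val_natCast, Nat.mod_eq_of_lt (by omega)]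
  · right
    refine ⟨by omega, ?_⟩
    have : x = (p : ZMod (p+1)) := by
      rw [← ZMod.natCast_zmod_val x]; congr 1; omega
    rw [this]
    have := ZMod.natCast_self (p+1)
    push_cast at this
    rw [this]; simp

lemma ind_Yc (p : ℕ) : Nonempty (ContinuousMap.HomotopyEquiv
    (IndSpace (cycleGraph (p+1))) (Yc p (EuclideanSpace ℝ (Fin 0)))) := by
  let T : (ZMod (p+1) → ℝ) → ℕ → ℝ := fun f i => if i ≤ p then f (i : ZMod (p+1)) else 0
  have cT : Continuous T := by
    refine continuous_pi fun i => ?_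
    simp only [T]
    split_ifs <;> fun_prop
  have hTv : ∀ f x, T f (ZMod.val x) = f x := by
    intro f x
    have := ZMod.val_lt x
    simp only [T]
    rw [if_pos (by omega), ZMod.natCast_zmod_val]
  have hT : ∀ f : IndSpace (cycleGraph (p+1)), T f.1 ∈ Kc p := by
    intro f
    obtain ⟨h0, h1, h2⟩ := f.2
    refine ⟨fun i => ?_, fun i hi => ?_, ?_, fun i hi => ?_⟩
    · simp only [T]; split_ifs
      · exact h0 _
      · exact le_rfl
    · have := h2 (i : ZMod (p+1)) ((i : ZMod (p+1)) + 1) (Or.inr rfl)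
      simp only [T]
      rw [if_pos (by omega), if_pos (by omega)]
      push_cast
      exact this
    · have h3 := ZMod.natCast_self (p+1)
      push_cast at h3
      have := h2 (0 : ZMod (p+1)) (p : ZMod (p+1)) (Or.inl h3.symm)
      simpa [T] using this
    · simp only [T]
      rw [if_neg (by omega)]
  let S : (ℕ → ℝ) → ℝ := fun g => ∑ x : ZMod (p+1), g x.val
  have cS : Continuous S := by simp only [S]; fun_prop
  have hS : ∀ z : Yc p (EuclideanSpace ℝ (Fin 0)), 0 < S z.1.1 := by
    intro z
    have hnn : ∀ x ∈ Finset.univ, 0 ≤ (fun x : ZMod (p+1) => z.1.1 x.val) x := fun x _ => z.2.1.1 _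
    rcases (Finset.sum_nonneg hnn).lt_or_eq with h | h
    · exact h
    · exfalso
      apply z.2.2
      refine Prod.ext (Kc_nz z.2.1 fun i hi => ?_) (Subsingleton.elim _ _)
      have := (Finset.sum_eq_zero_iff_of_nonneg hnn).1 h.symm (i : ZMod (p+1)) (Finset.mem_univ _)
      simp only [ZMod.val_natCast] at this
      rwa [Nat.mod_eq_of_lt (by omega)] at this
  have hS1 : ∀ f : IndSpace (cycleGraph (p+1)), S (T f.1) = 1 := by
    intro f
    simp only [S, hTv]
    exact f.2.2.1
  let F : C(IndSpace (cycleGraph (p+1)), Yc p (EuclideanSpace ℝ (Fin 0))) :=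
    ⟨fun f => ⟨(T f.1, 0), hT f, fun h => by
      have h1 := hS1 f
      have h2 : T f.1 = 0 := congrArg Prod.fst h
      rw [h2] at h1
      simp [S] at h1⟩, by
      apply Continuous.subtype_mk
      exact (cT.comp continuous_subtype_val).prodMk continuous_const⟩
  let G : C(Yc p (EuclideanSpace ℝ (Fin 0)), IndSpace (cycleGraph (p+1))) :=
    ⟨fun z => ⟨fun x : ZMod (p+1) => (S z.1.1)⁻¹ * z.1.1 x.val, by
      refine ⟨fun x => mul_nonneg (inv_nonneg.2 (hS z).le) (z.2.1.1 _), ?_, ?_⟩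
      · change ∑ x : ZMod (p+1), (S z.1.1)⁻¹ * z.1.1 x.val = 1
        rw [← Finset.mul_sum]
        exact inv_mul_cancel₀ (hS z).ne'
      · have key : ∀ x : ZMod (p+1), z.1.1 x.val = 0 ∨ z.1.1 (x+1).val = 0 := by
          intro x
          rcases zmod_succ p x with ⟨h1, h2⟩ | ⟨h1, h2⟩
          · rw [h2]; exact z.2.1.2.1 _ h1
          · rw [h1, h2]; exact z.2.1.2.2.1.symm
        intro x y h
        change x = (y : ZMod (p+1)) + 1 ∨ y = (x : ZMod (p+1)) + 1 at h
        change (S z.1.1)⁻¹ * z.1.1 (ZMod.val (n := p+1) x) = 0 ∨ (S z.1.1)⁻¹ * z.1.1 (ZMod.val (n := p+1) y) = 0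
        rcases h with rfl | rfl
        · rcases key y with h | h
          · right; rw [h, mul_zero]
          · left; rw [h, mul_zero]
        · rcases key x with h | h
          · left; rw [h, mul_zero]
          · right; rw [h, mul_zero]⟩, by
      apply Continuous.subtype_mk
      refine continuous_pi fun x => ?_
      refine Continuous.mul (Continuous.inv₀ (by fun_prop) fun z => (hS z).ne') (by fun_prop)⟩
  refine ⟨⟨F, G, ?_, ?_⟩⟩
  · have : G.comp F = ContinuousMap.id _ := by
      ext1 f
      apply Subtype.ext
      funext x
      change (S (T f.1))⁻¹ * T f.1 (ZMod.val (n := p+1) x) = f.1 x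
      rw [hS1, hTv]; simp
    rw [this]
  · apply homotopic_of_segment
    intro z
    have key : ∀ i, z.1.1 i = 0 → (F (G z)).1.1 i = 0 := by
      intro i hi
      change T (fun x : ZMod (p+1) => (S z.1.1)⁻¹ * z.1.1 x.val) i = 0
      simp only [T]
      split_ifs with h
      · rw [ZMod.val_natCast, Nat.mod_eq_of_lt (by omega), hi, mul_zero]
      · rfl
    refine Yc_seg (F (G z)).2 z.2 (Subsingleton.elim _ _) ?_ ?_
    · intro i hi
      rcases z.2.1.2.1 i hi with h | h
      · exact Or.inl ⟨key _ h, h⟩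
      · exact Or.inr ⟨key _ h, h⟩
    · rcases z.2.1.2.2.1 with h | h
      · exact Or.inl ⟨key _ h, h⟩
      · exact Or.inr ⟨key _ h, h⟩


def splitL (d : ℕ) : EuclideanSpace ℝ (Fin (d+1)) ≃L[ℝ] ℝ × (Fin d → ℝ) :=
  LinearEquiv.toContinuousLinearEquiv
  { toFun := fun x => (x 0, fun i => x i.succ)
    map_add' := fun x y => rfl
    map_smul' := fun c x => rfl
    invFun := fun z => WithLp.toLp 2 (Fin.cons z.1 z.2 : Fin (d+1) → ℝ)
    left_inv := fun x => by
      ext i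
      refine Fin.cases ?_ (fun j => ?_) i <;> simp
    right_inv := fun z => by simp }

lemma splitL_north (d : ℕ) : splitL d (northPole d).1 = (1, 0) := by
  refine Prod.ext ?_ ?_
  · change (EuclideanSpace.single (0 : Fin (d+1)) (1 : ℝ)) 0 = 1
    simp
  · funext i
    change (EuclideanSpace.single (0 : Fin (d+1)) (1 : ℝ)) i.succ = 0
    simp

def nrm {d : ℕ} (w : ℝ × (Fin d → ℝ)) (h : w ≠ 0) : nSphere d :=
  ⟨‖(splitL d).symm w‖⁻¹ • (splitL d).symm w, by
    have : (splitL d).symm w ≠ 0 := by simpa using h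
    rw [mem_sphere_zero_iff_norm, norm_smul, norm_inv, norm_norm,
      inv_mul_cancel₀ (norm_ne_zero_iff.2 this)]⟩

lemma cont_nrm {d : ℕ} {X : Type} [TopologicalSpace X] (U : X → ℝ × (Fin d → ℝ))
    (hU : Continuous U) (h : ∀ x, U x ≠ 0) : Continuous (fun x => nrm (U x) (h x)) := by
  have cW : Continuous (fun x => (splitL d).symm (U x)) := by fun_prop
  apply Continuous.subtype_mk
  refine Continuous.smul (Continuous.inv₀ cW.norm fun x => ?_) cW
  have := h x
  simpa using this

lemma nrm_north {d : ℕ} (a : ℝ) (ha : 0 < a) (h : ((a, 0) : ℝ × (Fin d → ℝ)) ≠ 0) :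
    nrm (a, 0) h = northPole d := by
  apply Subtype.ext
  have e : (splitL d).symm (a, 0) = a • (northPole d).1 := by
    rw [ContinuousLinearEquiv.symm_apply_eq, map_smul, splitL_north]; simp
  change ‖(splitL d).symm (a, 0)‖⁻¹ • (splitL d).symm (a, 0) = _
  have hn : ‖(northPole d).1‖ = 1 := mem_sphere_zero_iff_norm.1 (northPole d).2
  rw [e, norm_smul, hn, Real.norm_of_nonneg ha.le, smul_smul, mul_one, inv_mul_cancel₀ ha.ne',
    one_smul]

lemma nrm_split {d : ℕ} (x : nSphere d) (h : splitL d x.1 ≠ 0) : nrm (splitL d x.1) h = x := by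
  apply Subtype.ext
  change ‖(splitL d).symm (splitL d x.1)‖⁻¹ • (splitL d).symm (splitL d x.1) = _
  have hn : ‖x.1‖ = 1 := mem_sphere_zero_iff_norm.1 x.2
  rw [ContinuousLinearEquiv.symm_apply_apply, hn]; simp

lemma split_ne {d : ℕ} (x : nSphere d) : splitL d x.1 ≠ 0 := by
  have hn : ‖x.1‖ = 1 := mem_sphere_zero_iff_norm.1 x.2
  intro h
  have : x.1 = 0 := by simpa using h
  rw [this] at hn
  simp at hn

lemma seg_ne {d : ℕ} {l c s t : ℝ} {v : Fin d → ℝ} (hl : 0 < l) (hc : 0 ≤ c) (hs : 0 ≤ s)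
    (hcs : c = 0 ∨ s = 0) (hne : ¬ (c = 0 ∧ s = 0 ∧ v = 0)) (h0 : 0 ≤ t) (h1 : t ≤ 1) :
    (1 - t) • l • ((‖v‖ + c - s, s • v) : ℝ × (Fin d → ℝ)) + t • (c - s, v) ≠ 0 := by
  intro h
  have e1 : (1 - t) * (l * (‖v‖ + c - s)) + t * (c - s) = 0 := congrArg Prod.fst h
  have e2 : (1 - t) • l • s • v + t • v = 0 := congrArg Prod.snd h
  by_cases hv : v = 0
  · subst hv
    have e3 : ((1 - t) * l + t) * (c - s) = 0 := by
      rw [← e1]; simp; ring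
    have hpos : 0 < (1 - t) * l + t := by
      rcases h0.lt_or_eq with h | h
      · have := mul_nonneg (sub_nonneg.2 h1) hl.le
        linarith
      · subst h; linarith
    rcases mul_eq_zero.1 e3 with h | h
    · exact hpos.ne' h
    · apply hne
      refine ⟨?_, ?_, rfl⟩ <;> rcases hcs with h' | h' <;> linarith
  · rw [smul_smul, smul_smul, ← add_smul] at e2
    rcases smul_eq_zero.1 e2 with h2 | h2
    · have a1 : 0 ≤ (1 - t) * l * s := mul_nonneg (mul_nonneg (sub_nonneg.2 h1) hl.le) hs
      have ht : t = 0 := by linarith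
      subst ht
      have hs0 : l * s = 0 := by simpa using h2
      have hs0 : s = 0 := by
        rcases mul_eq_zero.1 hs0 with h | h
        · linarith
        · exact h
      subst hs0
      have : 0 < ‖v‖ := norm_pos_iff.2 hv
      have : 0 < l * (‖v‖ + c) := by positivity
      simp at e1
      rcases e1 with h | h <;> linarith
    · exact hv h2

def emb (i : ℕ) (h : ℝ) : ℕ → ℝ := fun j =>
  if j = i then max (-h) 0 else if j = 2 then max h 0 else 0

lemma cont_emb (i : ℕ) : Continuous (emb i) := by
  refine continuous_pi fun j => ?_
  unfold emb
  split_ifs <;> fun_prop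

lemma emb_mem {i : ℕ} (hi : i < 2) (h : ℝ) : emb i h ∈ Kc 2 := by
  refine ⟨fun j => ?_, fun j hj => ?_, ?_, fun j hj => ?_⟩ <;> unfold emb <;> grind

lemma emb_ne {i : ℕ} (hi : i < 2) {E : Type} [Zero E] {w : ℝ × E} (hw : w ≠ 0) :
    (emb i w.1, w.2) ∈ Yc 2 E := by
  refine ⟨emb_mem hi _, fun h => hw ?_⟩
  simp only [Prod.mk_eq_zero] at h
  refine Prod.ext ?_ h.2
  have e0 := congrFun h.1 i
  have e1 := congrFun h.1 2
  simp only [emb, Pi.zero_apply, Prod.fst_zero] at e0 e1 ⊢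
  grind

lemma emb_self {g : ℕ → ℝ} (hg : g ∈ Kc 2) {i j : ℕ} (hij : (i = 0 ∧ j = 1) ∨ (i = 1 ∧ j = 0))
    (hj : g j = 0) : emb i (g 2 - g i) = g := by
  have a0 := hg.1 0
  have a1 := hg.1 1
  have a2 := hg.1 2
  have b0 := hg.2.2.1
  have b1 := hg.2.1 1 (by omega)
  ext k
  have := hg.2.2.2 k
  unfold emb
  have : k = 0 ∨ k = 1 ∨ k = 2 ∨ 2 < k := by omega
  grind

def Uc {d : ℕ} (i j : ℕ) (z : (ℕ → ℝ) × (Fin d → ℝ)) : ℝ × (Fin d → ℝ) :=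
  (‖z.2‖ + (z.1 2 + z.1 j) - z.1 i, z.1 i • z.2)

lemma cont_Uc {d : ℕ} (i j : ℕ) : Continuous (Uc (d := d) i j) := by
  unfold Uc; fun_prop

lemma Kc2 {g : ℕ → ℝ} (hg : g ∈ Kc 2) : 0 ≤ g 0 ∧ 0 ≤ g 1 ∧ 0 ≤ g 2 ∧ (g 0 = 0 ∨ g 1 = 0) ∧
    (g 1 = 0 ∨ g 2 = 0) ∧ (g 0 = 0 ∨ g 2 = 0) :=
  ⟨hg.1 0, hg.1 1, hg.1 2, hg.2.1 0 (by omega), hg.2.1 1 (by omega), hg.2.2.1⟩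

lemma Yc2_ne {d : ℕ} {z : (ℕ → ℝ) × (Fin d → ℝ)} (hz : z ∈ Yc 2 (Fin d → ℝ)) 
    (h0 : z.1 0 = 0) (h1 : z.1 1 = 0) (h2 : z.1 2 = 0) (hv : z.2 = 0) : False := by
  refine hz.2 (Prod.ext (Kc_nz hz.1 fun i hi => ?_) hv)
  have : i = 0 ∨ i = 1 ∨ i = 2 := by omega
  rcases this with rfl | rfl | rfl <;> assumption

lemma Uc_ne {d : ℕ} {i j : ℕ} (hij : (i = 0 ∧ j = 1) ∨ (i = 1 ∧ j = 0))
    {z : (ℕ → ℝ) × (Fin d → ℝ)} (hz : z ∈ Yc 2 (Fin d → ℝ)) : Uc i j z ≠ 0 := by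
  obtain ⟨a0, a1, a2, b0, b1, b2⟩ := Kc2 hz.1
  have := seg_ne (d := d) (l := 1) (c := z.1 2 + z.1 j) (s := z.1 i) (t := 0) (v := z.2) one_pos
    (by rcases hij with ⟨rfl, rfl⟩ | ⟨rfl, rfl⟩ <;> linarith) (hz.1.1 i)
    (by grind) (by
      rintro ⟨h1, h2, h3⟩
      apply Yc2_ne hz <;> grind) le_rfl zero_le_one
  simpa [Uc] using this

def Fw {d : ℕ} (z : Yc 2 (Fin d → ℝ)) : WedgeOfSpheres 2 d :=
  if z.1.1 0 ≤ z.1.1 1 then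
    Quotient.mk (wedgeSetoid 2 d) (1, nrm (Uc 1 0 z.1) (Uc_ne (Or.inr ⟨rfl, rfl⟩) z.2))
  else Quotient.mk (wedgeSetoid 2 d) (0, nrm (Uc 0 1 z.1) (Uc_ne (Or.inl ⟨rfl, rfl⟩) z.2))

lemma nrm_Uc {d : ℕ} {i j : ℕ} (hij : (i = 0 ∧ j = 1) ∨ (i = 1 ∧ j = 0))
    (z : Yc 2 (Fin d → ℝ)) (h : z.1.1 i = 0) (hne : Uc i j z.1 ≠ 0) :
    nrm (Uc i j z.1) hne = northPole d := by
  obtain ⟨a0, a1, a2, b0, b1, b2⟩ := Kc2 z.2.1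
  have e : Uc i j z.1 = (‖z.1.2‖ + (z.1.1 2 + z.1.1 j), 0) := by simp [Uc, h]
  have hn := norm_nonneg z.1.2
  have hj := z.2.1.1 j
  have hpos : 0 ≤ ‖z.1.2‖ + (z.1.1 2 + z.1.1 j) := by linarith
  have hpos : 0 < ‖z.1.2‖ + (z.1.1 2 + z.1.1 j) := by
    rcases hpos.lt_or_eq with h | h
    · exact h
    · exact absurd (by rw [e, ← h]; rfl) hne
  have := nrm_north (d := d) _ hpos (by rw [← e]; exact hne)
  rw [← this]
  congr 1

lemma Fw0 {d : ℕ} (z : Yc 2 (Fin d → ℝ)) (h : z.1.1 1 = 0) :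
    Fw z = Quotient.mk (wedgeSetoid 2 d) (0, nrm (Uc 0 1 z.1) (Uc_ne (Or.inl ⟨rfl, rfl⟩) z.2)) := by
  unfold Fw
  split_ifs with h'
  · apply Quotient.sound
    right
    have := z.2.1.1 0
    exact ⟨nrm_Uc (Or.inr ⟨rfl, rfl⟩) z h (Uc_ne (Or.inr ⟨rfl, rfl⟩) z.2), nrm_Uc (Or.inl ⟨rfl, rfl⟩) z (by linarith) (Uc_ne (Or.inl ⟨rfl, rfl⟩) z.2)⟩
  · rfl

lemma Fw1 {d : ℕ} (z : Yc 2 (Fin d → ℝ)) (h : z.1.1 0 = 0) :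
    Fw z = Quotient.mk (wedgeSetoid 2 d) (1, nrm (Uc 1 0 z.1) (Uc_ne (Or.inr ⟨rfl, rfl⟩) z.2)) := by
  unfold Fw
  rw [if_pos]
  rw [h]; exact z.2.1.1 1

lemma cont_Fw {d : ℕ} : Continuous (Fw (d := d)) := by
  unfold Fw
  have cU1 := cont_Uc (d := d) 1 0
  have cU0 := cont_Uc (d := d) 0 1
  refine Continuous.if_le ?_ ?_ (by fun_prop) (by fun_prop) ?_
  · exact continuous_quotient_mk'.comp (continuous_const.prodMk (cont_nrm _ (by fun_prop) _))
  · exact continuous_quotient_mk'.comp (continuous_const.prodMk (cont_nrm _ (by fun_prop) _))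
  · intro z h
    obtain ⟨a0, a1, a2, b0, b1, b2⟩ := Kc2 z.2.1
    apply Quotient.sound
    right
    exact ⟨nrm_Uc (Or.inr ⟨rfl, rfl⟩) z (by grind) (Uc_ne (Or.inr ⟨rfl, rfl⟩) z.2),
      nrm_Uc (Or.inl ⟨rfl, rfl⟩) z (by grind) (Uc_ne (Or.inl ⟨rfl, rfl⟩) z.2)⟩

def Gw0 {d : ℕ} (q : Fin 2 × nSphere d) : Yc 2 (Fin d → ℝ) :=
  ⟨(emb q.1.val (splitL d q.2.1).1, (splitL d q.2.1).2), emb_ne q.1.2 (split_ne q.2)⟩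

lemma cont_Gw0 {d : ℕ} : Continuous (Gw0 (d := d)) := by
  rw [continuous_prod_of_discrete_left]
  intro i
  apply Continuous.subtype_mk
  exact Continuous.prodMk ((cont_emb i.val).comp (by fun_prop)) (by fun_prop)

def Gw {d : ℕ} : WedgeOfSpheres 2 d → Yc 2 (Fin d → ℝ) :=
  Quotient.lift Gw0 (by
    rintro ⟨i, x⟩ ⟨j, y⟩ (h | ⟨h1, h2⟩)
    · rw [h]
    · dsimp only at h1 h2
      subst h1 h2
      apply Subtype.ext
      simp only [Gw0, splitL_north]
      refine Prod.ext ?_ rfl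
      funext k
      have := i.2
      have := j.2
      simp only [emb]
      grind)

lemma cont_Gw {d : ℕ} : Continuous (Gw (d := d)) := cont_Gw0.quotient_lift _

lemma Fw_Gw0 {d : ℕ} (i : Fin 2) (x : nSphere d) (c s : ℝ) (v : Fin d → ℝ)
    (hc : c = max (splitL d x.1).1 0) (hs : s = max (-(splitL d x.1).1) 0)
    (hv : v = (splitL d x.1).2) (h : ((‖v‖ + c - s, s • v) : ℝ × (Fin d → ℝ)) ≠ 0) :
    Fw (Gw0 (i, x)) = Quotient.mk (wedgeSetoid 2 d) (i, nrm (‖v‖ + c - s, s • v) h) := by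
  fin_cases i
  · rw [Fw0 _ (by simp [Gw0, emb])]
    have e : Uc 0 1 (Gw0 ((0 : Fin 2), x)).1 = (‖v‖ + c - s, s • v) := by
      simp [Uc, Gw0, emb, hc, hs, hv]
    congr 2
    simp only [← e]
    rfl
  · rw [Fw1 _ (by simp [Gw0, emb])]
    have e : Uc 1 0 (Gw0 ((1 : Fin 2), x)).1 = (‖v‖ + c - s, s • v) := by
      simp [Uc, Gw0, emb, hc, hs, hv]
    congr 2
    simp only [← e]
    rfl

def hs0 {d : ℕ} (t : ℝ) (x : nSphere d) : ℝ × (Fin d → ℝ) :=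
  (1 - t) • (1 : ℝ) • (‖(splitL d x.1).2‖ + max (splitL d x.1).1 0 - max (-(splitL d x.1).1) 0,
    max (-(splitL d x.1).1) 0 • (splitL d x.1).2) +
  t • (max (splitL d x.1).1 0 - max (-(splitL d x.1).1) 0, (splitL d x.1).2)

lemma hs0_ne {d : ℕ} (t : unitInterval) (x : nSphere d) : hs0 t x ≠ 0 := by
  apply seg_ne one_pos (le_max_right _ _) (le_max_right _ _) _ _ t.2.1 t.2.2
  · grind
  · rintro ⟨h1, h2, h3⟩
    refine split_ne x (Prod.ext ?_ h3)
    have k1 := max_eq_right_iff.1 h1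
    have k2 := max_eq_right_iff.1 h2
    exact le_antisymm k1 (neg_nonpos.1 k2)

def hw0 {d : ℕ} : C((Fin 2 × nSphere d) × unitInterval, WedgeOfSpheres 2 d) :=
  ⟨fun q => Quotient.mk (wedgeSetoid 2 d) (q.1.1, nrm (hs0 q.2 q.1.2) (hs0_ne _ _)), by
    refine continuous_quotient_mk'.comp (Continuous.prodMk (by fun_prop) (cont_nrm _ ?_ _))
    unfold hs0
    fun_prop⟩

lemma nrm_congr {d : ℕ} {w w' : ℝ × (Fin d → ℝ)} (h : w = w') (hw : w ≠ 0) (hw' : w' ≠ 0) :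
    nrm w hw = nrm w' hw' := by subst h; rfl

lemma hw0_north {d : ℕ} (t : unitInterval) (x : nSphere d) (hx : x = northPole d) :
    nrm (hs0 t x) (hs0_ne _ _) = northPole d := by
  have e : hs0 t x = (1, 0) := by
    rw [hs0, hx, splitL_north]
    refine Prod.ext ?_ ?_ <;> simp
  rw [nrm_congr e _ (by simp)]
  exact nrm_north 1 one_pos _

lemma FG_id {d : ℕ} : ((⟨Fw, cont_Fw⟩ : C(Yc 2 (Fin d → ℝ), WedgeOfSpheres 2 d)).comp
    ⟨Gw, cont_Gw⟩).Homotopic (ContinuousMap.id _) := by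
  let h1 : WedgeOfSpheres 2 d → C(unitInterval, WedgeOfSpheres 2 d) :=
    Quotient.lift (hw0.curry) (by
      rintro ⟨i, x⟩ ⟨j, y⟩ (h | ⟨h1, h2⟩)
      · rw [h]
      · ext1 t
        apply Quotient.sound
        right
        exact ⟨hw0_north t x h1, hw0_north t y h2⟩)
  have ch1 : Continuous h1 := hw0.curry.continuous.quotient_lift _
  refine ⟨⟨⟨fun q => h1 q.2 q.1, by fun_prop⟩, ?_, ?_⟩⟩
  · intro w
    induction w using Quotient.inductionOn with | _ q =>
    obtain ⟨i, x⟩ := q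
    change Quotient.mk (wedgeSetoid 2 d) (i, nrm (hs0 ((0 : unitInterval) : ℝ) x) (hs0_ne 0 x)) = Fw (Gw0 (i, x))
    have e : hs0 ((0 : unitInterval) : ℝ) x = (‖(splitL d x.1).2‖ + max (splitL d x.1).1 0 - max (-(splitL d x.1).1) 0,
      max (-(splitL d x.1).1) 0 • (splitL d x.1).2) := by simp [hs0]
    have hne := hs0_ne 0 x
    rw [e] at hne
    rw [Fw_Gw0 i x _ _ _ rfl rfl rfl hne, nrm_congr e _ hne]
  · intro w
    induction w using Quotient.inductionOn with | _ q =>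
    obtain ⟨i, x⟩ := q
    change Quotient.mk (wedgeSetoid 2 d) (i, nrm (hs0 ((1 : unitInterval) : ℝ) x) (hs0_ne 1 x)) = Quotient.mk (wedgeSetoid 2 d) (i, x)
    have e : hs0 ((1 : unitInterval) : ℝ) x = splitL d x.1 := by
      refine Prod.ext ?_ ?_
      · simp [hs0]
      · simp [hs0]
    rw [nrm_congr e _ (split_ne x), nrm_split]

def lam {d : ℕ} (w : ℝ × (Fin d → ℝ)) : ℝ := ‖(splitL d).symm w‖⁻¹

lemma split_nrm {d : ℕ} (w : ℝ × (Fin d → ℝ)) (h : w ≠ 0) : splitL d (nrm w h).1 = lam w • w := by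
  simp [nrm, lam]

lemma lam_pos {d : ℕ} (w : ℝ × (Fin d → ℝ)) (h : w ≠ 0) : 0 < lam w := by
  have : (splitL d).symm w ≠ 0 := by simpa using h
  unfold lam
  positivity

def sg {d : ℕ} (i j : ℕ) (t : ℝ) (z : (ℕ → ℝ) × (Fin d → ℝ)) : ℝ × (Fin d → ℝ) :=
  (1 - t) • lam (Uc i j z) • Uc i j z + t • (z.1 2 - z.1 i, z.2)

lemma sg_ne {d : ℕ} {i j : ℕ} (hij : (i = 0 ∧ j = 1) ∨ (i = 1 ∧ j = 0))
    {z : (ℕ → ℝ) × (Fin d → ℝ)} (hz : z ∈ Yc 2 (Fin d → ℝ)) (hj : z.1 j = 0) (t : unitInterval) :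
    sg i j t z ≠ 0 := by
  obtain ⟨a0, a1, a2, b0, b1, b2⟩ := Kc2 hz.1
  have hl := lam_pos _ (Uc_ne hij hz)
  have e : Uc i j z = (‖z.2‖ + z.1 2 - z.1 i, z.1 i • z.2) := by simp [Uc, hj]
  unfold sg
  rw [e] at hl ⊢
  apply seg_ne hl a2 (hz.1.1 i) _ _ t.2.1 t.2.2
  · grind
  · rintro ⟨h1, h2, h3⟩
    apply Yc2_ne hz <;> grind

def em {d : ℕ} (i : ℕ) (w : ℝ × (Fin d → ℝ)) : (ℕ → ℝ) × (Fin d → ℝ) := (emb i w.1, w.2)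

lemma cont_em {d : ℕ} (i : ℕ) : Continuous (em (d := d) i) := by
  have := cont_emb i
  unfold em; fun_prop

def hY {d : ℕ} (q : unitInterval × Yc 2 (Fin d → ℝ)) : (ℕ → ℝ) × (Fin d → ℝ) :=
  if q.2.1.1 0 ≤ q.2.1.1 1 then em 1 (sg 1 0 q.1 q.2.1) else em 0 (sg 0 1 q.1 q.2.1)

lemma cont_sg {d : ℕ} {i j : ℕ} (hij : (i = 0 ∧ j = 1) ∨ (i = 1 ∧ j = 0)) :
    Continuous (fun q : unitInterval × Yc 2 (Fin d → ℝ) => sg i j q.1 q.2.1) := by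
  have cU := cont_Uc (d := d) i j
  have : Continuous (fun q : unitInterval × Yc 2 (Fin d → ℝ) => lam (Uc i j q.2.1)) := by
    unfold lam
    refine Continuous.inv₀ (by fun_prop) fun q => ?_
    have := Uc_ne hij q.2.2
    simpa using this
  unfold sg
  fun_prop

lemma hY_mem {d : ℕ} (q : unitInterval × Yc 2 (Fin d → ℝ)) : hY q ∈ Yc 2 (Fin d → ℝ) := by
  obtain ⟨a0, a1, a2, b0, b1, b2⟩ := Kc2 q.2.2.1
  unfold hY
  split_ifs with h
  · exact emb_ne (by omega) (sg_ne (Or.inr ⟨rfl, rfl⟩) q.2.2 (by grind) _)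
  · exact emb_ne (by omega) (sg_ne (Or.inl ⟨rfl, rfl⟩) q.2.2 (by grind) _)

lemma em_nonneg {d : ℕ} (w : ℝ × (Fin d → ℝ)) (h : 0 ≤ w.1) : em 0 w = em 1 w := by
  refine Prod.ext ?_ rfl
  funext k
  simp only [em, emb]
  grind

lemma cont_hY {d : ℕ} : Continuous (hY (d := d)) := by
  unfold hY
  refine Continuous.if_le ((cont_em 1).comp (cont_sg (Or.inr ⟨rfl, rfl⟩)))
    ((cont_em 0).comp (cont_sg (Or.inl ⟨rfl, rfl⟩))) (by fun_prop) (by fun_prop) ?_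
  intro q h
  obtain ⟨a0, a1, a2, b0, b1, b2⟩ := Kc2 q.2.2.1
  have h0 : q.2.1.1 0 = 0 := by grind
  have h1 : q.2.1.1 1 = 0 := by grind
  have e : sg 1 0 q.1 q.2.1 = sg 0 1 q.1 q.2.1 := by
    simp [sg, Uc, h0, h1]
  rw [e, em_nonneg]
  have hl := lam_pos _ (Uc_ne (Or.inl ⟨rfl, rfl⟩) q.2.2)
  simp only [sg, Prod.fst_add, Prod.smul_fst, smul_eq_mul]
  have t0 := q.1.2.1
  have t1 : 0 ≤ 1 - (q.1 : ℝ) := sub_nonneg.2 q.1.2.2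
  have e1 : 0 ≤ (Uc 0 1 q.2.1).1 := by
    simp only [Uc, h0, h1]
    have := norm_nonneg q.2.1.2
    linarith
  have e2 : 0 ≤ q.2.1.1 2 - q.2.1.1 0 := by linarith
  positivity

lemma GF_id {d : ℕ} : ((⟨Gw, cont_Gw⟩ : C(WedgeOfSpheres 2 d, Yc 2 (Fin d → ℝ))).comp
    ⟨Fw, cont_Fw⟩).Homotopic (ContinuousMap.id _) := by
  refine ⟨⟨⟨fun q => ⟨hY q, hY_mem q⟩, cont_hY.subtype_mk _⟩, ?_, ?_⟩⟩
  · intro z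
    apply Subtype.ext
    change hY (0, z) = (Gw (Fw z)).1
    unfold hY Fw
    dsimp only
    split_ifs with h
    · change _ = (Gw0 _).1
      simp [Gw0, split_nrm, em, sg]
    · change _ = (Gw0 _).1
      simp [Gw0, split_nrm, em, sg]
  · intro z
    apply Subtype.ext
    change hY (1, z) = z.1
    obtain ⟨a0, a1, a2, b0, b1, b2⟩ := Kc2 z.2.1
    unfold hY
    dsimp only
    split_ifs with h
    · have := emb_self z.2.1 (i := 1) (j := 0) (by simp) (by grind)
      refine Prod.ext ?_ ?_ <;> simp [em, sg, this]
    · have := emb_self z.2.1 (i := 0) (j := 1) (by simp) (by grind)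
      refine Prod.ext ?_ ?_ <;> simp [em, sg, this]

lemma base2 (d : ℕ) : Nonempty (ContinuousMap.HomotopyEquiv (Yc 2 (Fin d → ℝ))
    (WedgeOfSpheres 2 d)) :=
  ⟨⟨⟨Fw, cont_Fw⟩, ⟨Gw, cont_Gw⟩, GF_id, FG_id⟩⟩

lemma ind_nat (p : ℕ) (q k : ℕ) (h : p = q + 3 * k) (F : Type) [NormedAddCommGroup F]
    [NormedSpace ℝ F] [FiniteDimensional ℝ F] (hF : Module.finrank ℝ F = k) :
    Nonempty (ContinuousMap.HomotopyEquiv (IndSpace (cycleGraph (p+1))) (Yc q F)) := by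
  subst h
  obtain ⟨e1⟩ := ind_Yc (q + 3 * k)
  obtain ⟨e2⟩ := iter q k (EuclideanSpace ℝ (Fin 0)) F (by simp [hF])
  exact ⟨e1.trans e2⟩

/-- The homotopy type of the independence complex of a cycle (Kozlov):
`Ind(C_m) ≃ S^{k-1} ∨ S^{k-1}` if `m = 3k`, and `Ind(C_m) ≃ S^{k-1}` if `m = 3k ± 1`. -/
theorem ind_cycle_homotopy_type (m k : ℕ) (hm : 2 ≤ m) :
    (m = 3 * k → Nonempty (ContinuousMap.HomotopyEquiv
        (IndSpace (cycleGraph m)) (WedgeOfSpheres 2 (k - 1)))) ∧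
    ((m = 3 * k + 1 ∨ m = 3 * k - 1) → Nonempty (ContinuousMap.HomotopyEquiv
        (IndSpace (cycleGraph m)) (nSphere (k - 1)))) := by
  obtain ⟨p, rfl⟩ : ∃ p, m = p + 1 := ⟨m - 1, by omega⟩
  refine ⟨fun h => ?_, ?_⟩
  · obtain ⟨e1⟩ := ind_nat p 2 (k - 1) (by omega) (Fin (k - 1) → ℝ) (by simp)
    obtain ⟨e2⟩ := base2 (k - 1)
    exact ⟨e1.trans e2⟩
  · obtain ⟨e3⟩ := base0 (k - 1)
    rintro (h | h)
    · obtain ⟨e1⟩ := ind_nat p 0 k (by omega) (EuclideanSpace ℝ (Fin (k - 1 + 1)))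
        (by simp; omega)
      exact ⟨e1.trans e3⟩
    · obtain ⟨e1⟩ := ind_nat p 1 (k - 1) (by omega) (Fin (k - 1) → ℝ) (by simp)
      obtain ⟨e2⟩ := base1 (Fin (k - 1) → ℝ)
      obtain ⟨e4⟩ := iter 0 0 (ℝ × (Fin (k - 1) → ℝ)) (EuclideanSpace ℝ (Fin (k - 1 + 1)))
        (by simp; omega)
      exact ⟨(e1.trans e2).trans (e4.trans e3)⟩



end Lovasz
end
end
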